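/- Let T be an o-minimal theory in which all principal types are interdefinable, and assume Condition (★) holds for A, p, c̄, i, k, and β̄. Then there is an A-definable set C⁰ ⊆ 𝔠^n containing c̄ such that for every ā ∈ π_{≤k−1}(C⁰) (the projection of C⁰ onto the first k−1 coordinates), the closure cl(C⁰) contains exactly one point d̄ whose first k coordinates are ⟨ā, β_k(ā)⟩; moreover, for each such ā this unique point equals ⟨ā, β_k(ā), β_{k+1}(ā), …, β_n(ā)⟩, and hence is independent of the choice of C⁰. -/

import Mathlib

/-!
Write `a` for the first `k - 1` coordinates of `c̄` and `z` for the fixed `∅`-definable element.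

*Continuity near `a`.* A set `D ∋ a`, definable over `A`, is chosen to represent the germ at `a`
of the locus of `tp(a/A)`, and `A`-definable functions are continuous along it (`lg_exists_cont`,
by the monotonicity theorem and induction on the number of variables).  Such germs survive the
adjunction of a parameter `c_j ∉ dcl(A a)` (`LG.add_param`).

*Comparison functions.* Interdefinability of principal types turns each `c_j`, principal above
`β_j(a)`, into some `d_j ∈ dcl(A a c_j)` principal above `z` (`PrincipalAbove.transfer`), and the
decreasing hypothesis allows `d_j ≤ d_k` to be arranged (`PrecSim.exists_principal`).  Writing
`d_j = U_j(a, c_j)` with `U_j` definable over `A`, the function `U_j(a, ·)` increases from `z`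
immediately to the right of `β_j(a)` (`increasing_of_principal`).

*The set `C⁰`.* `LimSet` collects the tuples `y` whose initial part `x` lies in `D` and is good,
with `β_j(x) < y_j`, with `U_j(x, ·)` increasing on the interval from `β_j(x)` to `y_j`, and with
`z < U_j(x, y_j) ≤ U_k(x, y_k)`.  As `y_k` tends to `β_k(x)`, the value `U_k(x, y_k)` tends to
`z`; hence so do all `U_j(x, y_j)`, which forces `y_j` to tend to `β_j(x)`
(`LimSet.eq_of_mem_closure`).  Conversely the point with coordinates `x` and `β_j(x)` is a limit
of elements of `C⁰` (`LimSet.mem_closure`).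
-/

open FirstOrder FirstOrder.Language Set Topology Filter

namespace OMinPaper

/-- An `n`-ary function is `A`-definable if its graph is an `A`-definable set. -/
def DefFun (L : FirstOrder.Language) {M : Type*} [L.Structure M] (A : Set M) {n : ℕ}
    (f : (Fin n → M) → M) : Prop :=
  A.Definable L {p : Fin (n + 1) → M | f (Fin.init p) = p (Fin.last n)}

/-- A unary function is `A`-definable if its graph is an `A`-definable set. -/
def DefFun₁ (L : FirstOrder.Language) {M : Type*} [L.Structure M] (A : Set M)
    (f : M → M) : Prop :=
  A.Definable L {p : Fin 2 → M | f (p 0) = p 1}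

/-- An `n`-ary partial function with domain `Ω` is `A`-definable if its graph
(restricted to `Ω`) is an `A`-definable set. -/
def DefFunOn (L : FirstOrder.Language) {M : Type*} [L.Structure M] (A : Set M) {n : ℕ}
    (Ω : Set (Fin n → M)) (f : (Fin n → M) → M) : Prop :=
  A.Definable L {p : Fin (n + 1) → M | Fin.init p ∈ Ω ∧ f (Fin.init p) = p (Fin.last n)}

/-- A subset of a linear order is a point or an open interval (with endpoints
possibly `±∞`). -/
def IsIntervalOrPoint {M : Type*} [LinearOrder M] (s : Set M) : Prop :=
  (∃ a, s = {a}) ∨ (∃ a b, s = Set.Ioo a b) ∨ (∃ a, s = Set.Iio a) ∨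
    (∃ a, s = Set.Ioi a) ∨ s = Set.univ

/-- `M` is an o-minimal structure: the order is definable without parameters, it is a dense
linear order without endpoints, and every subset of `M` definable with parameters is a finite
union of points and open intervals. -/
def IsOMinimal (L : FirstOrder.Language) (M : Type*) [L.Structure M] [LinearOrder M] : Prop :=
  (∅ : Set M).Definable L {p : Fin 2 → M | p 0 < p 1} ∧
  DenselyOrdered M ∧ NoMinOrder M ∧ NoMaxOrder M ∧
  ∀ s : Set M, (Set.univ : Set M).Definable₁ L s →
    ∃ t : Finset (Set M), (∀ u ∈ t, IsIntervalOrPoint u) ∧ s = ⋃₀ ↑t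

/-- The definable closure of a parameter set `A`: elements whose singleton is `A`-definable. -/
def dcl (L : FirstOrder.Language) {M : Type*} [L.Structure M] (A : Set M) : Set M :=
  {b | A.Definable₁ L {b}}

/-- `c` is principal above `β` over `A`: `β ∈ dcl(A)`, `β < c`, and no point of `dcl(A)` lies
in the interval `(β, c)`. -/
def PrincipalAbove (L : FirstOrder.Language) {M : Type*} [L.Structure M] [LinearOrder M]
    (A : Set M) (c β : M) : Prop :=
  β ∈ dcl L A ∧ β < c ∧ ∀ d ∈ dcl L A, d ∉ Set.Ioo β c

/-- `c` is principal below `β` over `A`. -/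
def PrincipalBelow (L : FirstOrder.Language) {M : Type*} [L.Structure M] [LinearOrder M]
    (A : Set M) (c β : M) : Prop :=
  β ∈ dcl L A ∧ c < β ∧ ∀ d ∈ dcl L A, d ∉ Set.Ioo c β

/-- `c` realizes the principal type near `+∞` over `A`. -/
def NearPosInf (L : FirstOrder.Language) {M : Type*} [L.Structure M] [LinearOrder M]
    (A : Set M) (c : M) : Prop :=
  ∀ d ∈ dcl L A, d < c

/-- `c` realizes the principal type near `-∞` over `A`. -/
def NearNegInf (L : FirstOrder.Language) {M : Type*} [L.Structure M] [LinearOrder M]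
    (A : Set M) (c : M) : Prop :=
  ∀ d ∈ dcl L A, c < d

/-- `tp(c/A)` is principal. -/
def Principal (L : FirstOrder.Language) {M : Type*} [L.Structure M] [LinearOrder M]
    (A : Set M) (c : M) : Prop :=
  c ∉ dcl L A ∧ ((∃ β, PrincipalAbove L A c β) ∨ (∃ β, PrincipalBelow L A c β) ∨
    NearPosInf L A c ∨ NearNegInf L A c)

/-- Two (sets of realizations of) 1-types `P` and `Q` are interdefinable over `B`: there are
`B`-definable unary functions mapping every realization of one to a realization of the other. -/
def Interdef (L : FirstOrder.Language) {M : Type*} [L.Structure M] (B : Set M)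
    (P Q : Set M) : Prop :=
  (∃ f : M → M, DefFun₁ L B f ∧ ∀ x ∈ P, f x ∈ Q) ∧
  (∃ g : M → M, DefFun₁ L B g ∧ ∀ y ∈ Q, g y ∈ P)

/-- All principal types are interdefinable over `A`. -/
def AllPrincipalInterdefOver (L : FirstOrder.Language) {M : Type*} [L.Structure M]
    [LinearOrder M] (A : Set M) : Prop :=
  (∀ b : M, Interdef L (A ∪ {b}) {x | PrincipalAbove L (A ∪ {b}) x b}
      {x | NearPosInf L (A ∪ {b}) x}) ∧
  (∀ b c : M, Interdef L (A ∪ {b, c}) {x | PrincipalAbove L (A ∪ {b, c}) x b}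
      {x | PrincipalBelow L (A ∪ {b, c}) x c}) ∧
  Interdef L A {x | NearPosInf L A x} {x | NearNegInf L A x}

/-- All principal types are interdefinable in the theory of `M`. -/
def AllPrincipalInterdef (L : FirstOrder.Language) (M : Type*) [L.Structure M]
    [LinearOrder M] : Prop :=
  ∀ A : Set M, AllPrincipalInterdefOver L A

/-- `X` is cofinal at `a` in `N`: `X ∩ N` is cofinal in `{x ∈ N : x < a}`. -/
def CofinalAt {M : Type*} [LinearOrder M] (X N : Set M) (a : M) : Prop :=
  ∀ y ∈ N, y < a → ∃ x ∈ X ∩ N, x < a ∧ y ≤ x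

/-- `X` is coinitial at `a` in `N`: `X ∩ N` is coinitial in `{x ∈ N : x > a}`. -/
def CoinitialAt {M : Type*} [LinearOrder M] (X N : Set M) (a : M) : Prop :=
  ∀ y ∈ N, a < y → ∃ x ∈ X ∩ N, a < x ∧ x ≤ y

/-- `tp(a/B)` is in scale on `A`: some `B`-definable unary function maps `dcl(A)` to a set both
cofinal and coinitial at `a` in `dcl(B)`. -/
def InScale (L : FirstOrder.Language) {M : Type*} [L.Structure M] [LinearOrder M]
    (A B : Set M) (a : M) : Prop :=
  ∃ f : M → M, DefFun₁ L B f ∧ CofinalAt (f '' dcl L A) (dcl L B) a ∧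
    CoinitialAt (f '' dcl L A) (dcl L B) a

/-- `tp(a/B)` is near scale on `A`. -/
def NearScale (L : FirstOrder.Language) {M : Type*} [L.Structure M] [LinearOrder M]
    (A B : Set M) (a : M) : Prop :=
  ¬ InScale L A B a ∧ ∃ f : M → M, DefFun₁ L B f ∧
    (CofinalAt (f '' dcl L A) (dcl L B) a ∨ CoinitialAt (f '' dcl L A) (dcl L B) a)

/-- `tp(a/B)` is out of scale on `A`: no `B`-definable unary image of `dcl(A)` is cofinal or
coinitial at `a` in `dcl(B)`. -/
def OutOfScale (L : FirstOrder.Language) {M : Type*} [L.Structure M] [LinearOrder M]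
    (A B : Set M) (a : M) : Prop :=
  ∀ f : M → M, DefFun₁ L B f →
    ¬ CofinalAt (f '' dcl L A) (dcl L B) a ∧ ¬ CoinitialAt (f '' dcl L A) (dcl L B) a

/-- `a ≺_A b` (relative to the distinguished `∅`-definable element `z`). -/
def Prec (L : FirstOrder.Language) {M : Type*} [L.Structure M] [LinearOrder M]
    (z : M) (A : Set M) (a b : M) : Prop :=
  ∃ a' ∈ dcl L (A ∪ {a}), z < a' ∧ ∀ d ∈ dcl L (A ∪ {b}), d ∉ Set.Ioo z a'

/-- `a ∼_A b`. -/
def Sim (L : FirstOrder.Language) {M : Type*} [L.Structure M] [LinearOrder M]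
    (z : M) (A : Set M) (a b : M) : Prop :=
  ¬ Prec L z A a b ∧ ¬ Prec L z A b a

/-- `a ≾_A b`. -/
def PrecSim (L : FirstOrder.Language) {M : Type*} [L.Structure M] [LinearOrder M]
    (z : M) (A : Set M) (a b : M) : Prop :=
  Prec L z A a b ∨ Sim L z A a b

/-- The set of coordinates of `c̄` before index `i`, as a parameter set. -/
def below {M : Type*} {n : ℕ} (c : Fin n → M) (i : Fin n) : Set M :=
  c '' {k | k < i}

/-- The tuple `c̄` realizes a decreasing type over `A`: `c_i ≿_i c_j` for `i < j`. -/
def Decreasing (L : FirstOrder.Language) {M : Type*} [L.Structure M] [LinearOrder M]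
    (z : M) (A : Set M) {n : ℕ} (c : Fin n → M) : Prop :=
  ∀ i j : Fin n, i < j → PrecSim L z (A ∪ below c i) (c j) (c i)

/-- A curve `γ̄` (defined for `t` with `z < t < u`) is non-oscillatory: each definable function
`f` of `(t, γ̄(t))` either is eventually equal to, or eventually different from, any fixed value
`z₀`, as `t → z⁺`. -/
def NonOscillatory (L : FirstOrder.Language) {M : Type*} [L.Structure M] [LinearOrder M]
    (z : M) {n : ℕ} (γ : M → Fin n → M) : Prop :=
  ∀ f : (Fin (n + 1) → M) → M, DefFun L (Set.univ : Set M) f → ∀ z₀ : M,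
    ∃ s, z < s ∧ ((∀ t ∈ Set.Ioo z s, f (Fin.cons t (γ t)) = z₀) ∨
      (∀ t ∈ Set.Ioo z s, f (Fin.cons t (γ t)) ≠ z₀))

end OMinPaper

open OMinPaper

namespace OMinPaper

/-! ### Definable predicates and functions -/

section Definability

variable {L : FirstOrder.Language} {C : Type*} [L.Structure C] {A B : Set C} {α ι : Type}

/-- A predicate on tuples is `A`-definable if it cuts out an `A`-definable set. Tuples are indexed
by an arbitrary type, and quantifying over further variables enlarges this type by a sum. -/
def DP (L : FirstOrder.Language) {C : Type*} [L.Structure C] (A : Set C) {α : Type}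
    (P : (α → C) → Prop) : Prop :=
  A.Definable L {x | P x}

theorem DP.mono {P : (α → C) → Prop} (h : DP L A P) (hAB : A ⊆ B) : DP L B P :=
  Set.Definable.mono h hAB

theorem DP.and {P Q : (α → C) → Prop} (hP : DP L A P) (hQ : DP L A Q) :
    DP L A (fun x => P x ∧ Q x) :=
  Set.Definable.inter hP hQ

theorem DP.or {P Q : (α → C) → Prop} (hP : DP L A P) (hQ : DP L A Q) :
    DP L A (fun x => P x ∨ Q x) :=
  Set.Definable.union hP hQ

theorem DP.not {P : (α → C) → Prop} (hP : DP L A P) : DP L A (fun x => ¬ P x) :=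
  Set.Definable.compl hP

theorem DP.congr {P Q : (α → C) → Prop} (hP : DP L A P) (h : ∀ x, Q x ↔ P x) : DP L A Q := by
  have : Q = P := funext fun x => propext (h x)
  rwa [this]

theorem DP.imp {P Q : (α → C) → Prop} (hP : DP L A P) (hQ : DP L A Q) :
    DP L A (fun x => P x → Q x) :=
  (hP.not.or hQ).congr fun _ => imp_iff_not_or

theorem DP.iff {P Q : (α → C) → Prop} (hP : DP L A P) (hQ : DP L A Q) :
    DP L A (fun x => P x ↔ Q x) :=
  ((hP.imp hQ).and (hQ.imp hP)).congr fun _ => iff_iff_implies_and_implies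

theorem DP.prop (p : Prop) : DP L A (fun _ : α → C => p) := by
  by_cases hp : p
  · simp [DP, hp]
  · simp [DP, hp]

theorem DP.allFin [Finite ι] {P : ι → (α → C) → Prop} (hP : ∀ i, DP L A (P i)) :
    DP L A (fun x => ∀ i, P i x) := by
  have := Set.definable_iInter_of_finite hP
  unfold DP
  convert! this using 1
  ext; simp

theorem DP.exT [Finite ι] {P : (α → C) → (ι → C) → Prop}
    (h : DP L A (fun x : α ⊕ ι → C => P (fun i => x (Sum.inl i)) (fun i => x (Sum.inr i)))) :
    DP L A (fun x => ∃ y, P x y) :=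
  Set.Definable.exists_of_finite h

theorem DP.allT [Finite ι] {P : (α → C) → (ι → C) → Prop}
    (h : DP L A (fun x : α ⊕ ι → C => P (fun i => x (Sum.inl i)) (fun i => x (Sum.inr i)))) :
    DP L A (fun x => ∀ y, P x y) :=
  Set.Definable.forall_of_finite h

theorem DP.ex {P : (α → C) → C → Prop}
    (h : DP L A (fun x : α ⊕ Unit → C => P (fun i => x (Sum.inl i)) (x (Sum.inr ())))) :
    DP L A (fun x => ∃ y, P x y) :=
  (DP.exT (P := fun x (y : Unit → C) => P x (y ())) h).congr fun _ =>
    ⟨fun ⟨y, hy⟩ => ⟨fun _ => y, hy⟩, fun ⟨y, hy⟩ => ⟨y (), hy⟩⟩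

theorem DP.all {P : (α → C) → C → Prop}
    (h : DP L A (fun x : α ⊕ Unit → C => P (fun i => x (Sum.inl i)) (x (Sum.inr ())))) :
    DP L A (fun x => ∀ y, P x y) :=
  (DP.allT (P := fun x (y : Unit → C) => P x (y ())) h).congr fun _ =>
    ⟨fun h y => h (y ()), fun h y => h fun _ => y⟩

theorem DP.subst [Finite ι] {P : (ι → C) → Prop} (hP : DP L A P) {t : ι → (α → C) → C}
    (ht : ∀ i, A.DefinableFun L (t i)) : DP L A (fun x => P (fun i => t i x)) :=
  Set.Definable.preimage_map (F := fun x i => t i x) ht hP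

theorem DT.subst [Finite ι] {f : (ι → C) → C} (hf : A.DefinableFun L f) {t : ι → (α → C) → C}
    (ht : ∀ i, A.DefinableFun L (t i)) : A.DefinableFun L (fun x => f (fun i => t i x)) :=
  Set.DefinableFun.comp (g := fun x i => t i x) ht hf

theorem DT.var (i : α) : A.DefinableFun L (fun x : α → C => x i) := Set.DefinableFun.proj L

theorem DP.eq {s t : (α → C) → C} (hs : A.DefinableFun L s) (ht : A.DefinableFun L t) :
    DP L A (fun x => s x = t x) :=
  hs.ofPred_eq ht

/-- Membership in an `A`-definable subset of the line. -/
theorem DP.mem {S : Set C} (hS : A.Definable₁ L S) {t : (α → C) → C}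
    (ht : A.DefinableFun L t) : DP L A (fun x => t x ∈ S) :=
  DP.subst (P := fun y : Fin 1 → C => y 0 ∈ S) hS (t := fun _ => t) fun _ => ht

theorem def₁_of_DP {S : Set C} (h : DP L A (fun x : Unit → C => x () ∈ S)) :
    A.Definable₁ L S :=
  DP.subst h (t := fun _ (x : Fin 1 → C) => x 0) fun _ => DT.var 0

/-- A function whose graph is `A`-definable. -/
theorem DT.of_graph {f : (α → C) → C}
    (h : DP L A (fun x : α ⊕ Unit → C => f (fun i => x (Sum.inl i)) = x (Sum.inr ()))) :
    A.DefinableFun L f :=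
  Set.Definable.preimage_comp
    (fun i : α ⊕ Unit => (Sum.elim some (fun _ => none) i : Option α)) h

theorem DT.const {d : C} (hd : d ∈ dcl L A) : A.DefinableFun L (fun _ : α → C => d) :=
  DT.of_graph ((DP.mem (S := {d}) hd (DT.var (Sum.inr ()))).congr fun _ =>
    eq_comm)

theorem def₁_univ {S : Set C} (hS : A.Definable₁ L S) : (Set.univ : Set C).Definable₁ L S :=
  Set.Definable.mono hS (Set.subset_univ _)

theorem mem_dcl_of_mem {d : C} (hd : d ∈ A) : d ∈ dcl L A := Set.Definable.singleton_of_mem L hd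

theorem dcl_mono (h : A ⊆ B) : dcl L A ⊆ dcl L B := fun _ hd => Set.Definable.mono hd h

theorem mem_dcl_of_DP {d : C} (h : DP L A (fun x : Unit → C => x () = d)) : d ∈ dcl L A :=
  def₁_of_DP (S := {d}) h

/-- An `A`-definable unary function. -/
def D1 (L : FirstOrder.Language) {C : Type*} [L.Structure C] (A : Set C) (u : C → C) : Prop :=
  A.DefinableFun L (fun x : Unit → C => u (x ()))

theorem D1.mono {u : C → C} (hu : D1 L A u) (hAB : A ⊆ B) : D1 L B u := Set.DefinableFun.mono hu hAB

theorem D1.app {u : C → C} (hu : D1 L A u) {t : (α → C) → C} (ht : A.DefinableFun L t) :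
    A.DefinableFun L (fun x => u (t x)) :=
  DT.subst hu (t := fun _ => t) fun _ => ht

theorem D1.of_defFun₁ {u : C → C} (hu : DefFun₁ L A u) : D1 L A u :=
  DT.of_graph (DP.subst (P := fun p : Fin 2 → C => u (p 0) = p 1) hu
    (t := ![fun x => x (Sum.inl ()), fun x => x (Sum.inr ())]) fun i => by
      fin_cases i <;> exact DT.var _)

theorem D1.apply_mem {u : C → C} (hu : D1 L A u) {d : C} (hd : d ∈ dcl L A) : u d ∈ dcl L A :=
  mem_dcl_of_DP (DP.eq (DT.var ()) (D1.app hu (DT.const hd)))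

theorem DT.snoc_app {m : ℕ} {f : (Fin (m + 1) → C) → C} (hf : A.DefinableFun L f)
    {s : Fin m → (α → C) → C} (hs : ∀ l, A.DefinableFun L (s l)) {t : (α → C) → C}
    (ht : A.DefinableFun L t) :
    A.DefinableFun L (fun x => f (Fin.snoc (fun l => s l x) (t x))) := by
  have := DT.subst hf (t := Fin.snoc (α := fun _ => (α → C) → C) s t) (fun i => by
    refine Fin.lastCases ?_ (fun l => ?_) i
    · simpa using ht
    · simpa using hs l)
  convert this using 3 with x
  ext i
  refine Fin.lastCases ?_ (fun l => ?_) i <;> simp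

theorem DP.snoc_app {m : ℕ} {P : (Fin (m + 1) → C) → Prop} (hP : DP L A P)
    {s : Fin m → (α → C) → C} (hs : ∀ l, A.DefinableFun L (s l)) {t : (α → C) → C}
    (ht : A.DefinableFun L t) :
    DP L A (fun x => P (Fin.snoc (fun l => s l x) (t x))) := by
  have := DP.subst hP (t := Fin.snoc (α := fun _ => (α → C) → C) s t) (fun i => by
    refine Fin.lastCases ?_ (fun l => ?_) i
    · simpa using ht
    · simpa using hs l)
  convert this using 3 with x
  ext i
  refine Fin.lastCases ?_ (fun l => ?_) i <;> simp

/-- Separating parameters: a set definable over `A ∪ range y` is the fibre over `y` of an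
`A`-definable set. -/
theorem DP.exists_params {y : ι → C} {P : (α → C) → Prop} (h : DP L (A ∪ Set.range y) P) :
    ∃ Q : (α ⊕ ι → C) → Prop, DP L A Q ∧ ∀ x, P x ↔ Q (Sum.elim x y) := by
  classical
  obtain ⟨φ, hφ⟩ := Set.definable_iff_exists_formula_sum.1 h
  have key : ∀ b : (A ∪ Set.range y : Set C), b.1 ∈ A ∨ ∃ i, y i = b.1 := fun b => b.2
  let g : (A ∪ Set.range y : Set C) ⊕ α → A ⊕ (α ⊕ ι) := Sum.elim
    (fun b => if hb : b.1 ∈ A then Sum.inl ⟨b.1, hb⟩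
      else Sum.inr (Sum.inr ((key b).resolve_left hb).choose))
    (fun i => Sum.inr (Sum.inl i))
  refine ⟨fun v => (φ.relabel g).Realize (Sum.elim (↑) v),
    Set.definable_iff_exists_formula_sum.2 ⟨_, rfl⟩, fun x => ?_⟩
  have h1 : P x ↔ φ.Realize (Sum.elim (↑) x) := by
    have := Set.ext_iff.1 hφ x
    simpa using this
  rw [h1]
  change _ ↔ (φ.relabel g).Realize (Sum.elim (↑) (Sum.elim x y))
  rw [FirstOrder.Language.Formula.realize_relabel]
  have : (Sum.elim (fun b : (A ∪ Set.range y : Set C) => (b : C)) x) =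
      (Sum.elim (fun b : A => (b : C)) (Sum.elim x y)) ∘ g := by
    ext i
    rcases i with b | i
    · by_cases hb : b.1 ∈ A
      · simp [g, hb]
      · simp [g, hb, ((key b).resolve_left hb).choose_spec]
    · simp [g]
  rw [this]

/-- Parameters from the definable closure may be dropped. -/
theorem DP.drop_params [Finite α] [Finite ι] {y : ι → C} (hy : ∀ i, y i ∈ dcl L A) {P : (α → C) → Prop}
    (h : DP L (A ∪ Set.range y) P) : DP L A P := by
  obtain ⟨Q, hQ, hPQ⟩ := h.exists_params
  refine DP.congr (DP.subst hQ (t := fun i x => Sum.elim x y i) fun i => ?_) hPQ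
  rcases i with i | i
  · exact DT.var i
  · exact DT.const (hy i)

theorem DP.drop_one [Finite α] {b : C} (hb : b ∈ dcl L A) {P : (α → C) → Prop}
    (h : DP L (A ∪ {b}) P) : DP L A P := by
  refine DP.drop_params (ι := Unit) (y := fun _ => b) (fun _ => hb) ?_
  simpa using h

theorem dcl_union_singleton {b : C} (hb : b ∈ dcl L A) : dcl L (A ∪ {b}) = dcl L A :=
  Set.Subset.antisymm (fun _ hd => DP.drop_one hb hd) (dcl_mono Set.subset_union_left)

theorem D1.drop_one {b : C} (hb : b ∈ dcl L A) {u : C → C} (h : D1 L (A ∪ {b}) u) : D1 L A u :=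
  DP.drop_one (P := fun x => x ∈ Function.tupleGraph (fun x : Unit → C => u (x ()))) hb h

/-- Elements of `dcl (A ∪ range y)` are the values at `y` of `A`-definable functions; the element
`z` serves as value outside the natural domain. -/
theorem exists_fun_of_mem_dcl [Finite ι] {z : C} (hz : z ∈ dcl L (∅ : Set C)) {y : ι → C} {d : C}
    (hd : d ∈ dcl L (A ∪ Set.range y)) :
    ∃ h : (ι → C) → C, A.DefinableFun L h ∧ h y = d := by
  classical
  have hd' : DP L (A ∪ Set.range y) (fun x : Unit → C => x () = d) :=
    DP.mem (S := {d}) hd (DT.var ())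
  obtain ⟨Q, hQ, hPQ⟩ := hd'.exists_params
  have hex : ∀ v : ι → C, (∃ t, ∀ s, Q (Sum.elim (fun _ => s) v) ↔ s = t) ∨
      ¬ (∃ t, ∀ s, Q (Sum.elim (fun _ => s) v) ↔ s = t) := fun v => em _
  let h : (ι → C) → C := fun v =>
    if hv : ∃ t, ∀ s, Q (Sum.elim (fun _ => s) v) ↔ s = t then hv.choose else z
  have hy : ∃ t, ∀ s, Q (Sum.elim (fun _ => s) y) ↔ s = t :=
    ⟨d, fun s => (hPQ fun _ => s).symm⟩
  refine ⟨h, ?_, ?_⟩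
  · have hz' : z ∈ dcl L A := dcl_mono (Set.empty_subset _) hz
    have hQ' : ∀ (γ : Type) (t : (γ → C) → C) (v : ι → (γ → C) → C), A.DefinableFun L t →
        (∀ i, A.DefinableFun L (v i)) →
        DP L A (fun x => Q (Sum.elim (fun _ => t x) (fun i => v i x))) := by
      intro γ t v ht hv
      refine DP.congr (DP.subst hQ (t := Sum.elim (fun _ => t) v) ?_) (fun x => ?_)
      · rintro (i | i)
        · exact ht
        · exact hv i
      · have : (fun i => Sum.elim (fun _ : Unit => t) v i x) =
            Sum.elim (fun _ => t x) (fun i => v i x) := by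
          ext i; rcases i with i | i <;> rfl
        rw [this]
    have huniq : DP L A (fun x : ι ⊕ Unit → C =>
        ∃ t, ∀ s, Q (Sum.elim (fun _ => s) (fun i => x (Sum.inl i))) ↔ s = t) := by
      refine DP.ex (DP.all (DP.iff (hQ' _ _ _ ?_ ?_) (DP.eq ?_ ?_)))
      · exact DT.var _
      · exact fun i => DT.var _
      · exact DT.var _
      · exact DT.var _
    refine DT.of_graph (DP.congr (P := fun x : ι ⊕ Unit → C =>
        ((∃ t, ∀ s, Q (Sum.elim (fun _ => s) (fun i => x (Sum.inl i))) ↔ s = t) ∧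
          Q (Sum.elim (fun _ => x (Sum.inr ())) (fun i => x (Sum.inl i)))) ∨
        ((¬ ∃ t, ∀ s, Q (Sum.elim (fun _ => s) (fun i => x (Sum.inl i))) ↔ s = t) ∧
          x (Sum.inr ()) = z)) ?_ ?_)
    · exact (huniq.and (hQ' _ _ _ (DT.var _) fun i => DT.var _)).or
        (huniq.not.and (DP.eq (DT.var _) (DT.const hz')))
    · intro x
      by_cases hv : ∃ t, ∀ s, Q (Sum.elim (fun _ => s) (fun i => x (Sum.inl i))) ↔ s = t
      · have e : h (fun i => x (Sum.inl i)) = hv.choose := dif_pos hv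
        rw [e, hv.choose_spec]
        simp only [hv, true_and, not_true, false_and, or_false]
        exact eq_comm
      · have e : h (fun i => x (Sum.inl i)) = z := dif_neg hv
        rw [e]
        simp only [hv, false_and, not_false_eq_true, true_and, false_or]
        exact eq_comm
  · have e : h y = hy.choose := dif_pos hy
    rw [e]
    exact ((hy.choose_spec d).1 ((hPQ fun _ => d).1 rfl)).symm

theorem DT.cst (d : C) : (Set.univ : Set C).DefinableFun L (fun _ : α → C => d) :=
  DT.const (mem_dcl_of_mem trivial)

/-- A definable binary relation. -/
def DRel (L : FirstOrder.Language) {C : Type*} [L.Structure C] (A : Set C) (R : C → C → Prop) :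
    Prop :=
  DP L A (fun x : Bool → C => R (x true) (x false))

theorem DRel.app {R : C → C → Prop} (hR : DRel L A R) {s t : (α → C) → C}
    (hs : A.DefinableFun L s) (ht : A.DefinableFun L t) : DP L A (fun x => R (s x) (t x)) :=
  DP.subst hR (t := fun b => if b then s else t) fun b => by cases b <;> simpa

theorem DRel.eq : DRel L A (fun a b : C => a = b) :=
  DP.eq (DT.var _) (DT.var _)

end Definability

/-! ### Definable subsets of the line -/

section Line

variable {L : FirstOrder.Language} {C : Type*} [L.Structure C] [LinearOrder C] {A B : Set C}
  {α : Type}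

theorem DP.lt (hM : IsOMinimal L C) {s t : (α → C) → C} (hs : A.DefinableFun L s)
    (ht : A.DefinableFun L t) : DP L A (fun x => s x < t x) := by
  have h : DP L A (fun p : Fin 2 → C => p 0 < p 1) := DP.mono hM.1 (Set.empty_subset _)
  exact DP.subst h (t := ![s, t]) fun i => by fin_cases i <;> assumption

theorem DP.le (hM : IsOMinimal L C) {s t : (α → C) → C} (hs : A.DefinableFun L s)
    (ht : A.DefinableFun L t) : DP L A (fun x => s x ≤ t x) :=
  (DP.lt hM ht hs).not.congr fun _ => not_lt.symm

/-- The structure `C` on the reversed order. -/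
@[reducible] def dualStr (L : FirstOrder.Language) (C : Type*) [h : L.Structure C] :
    L.Structure Cᵒᵈ := h

theorem IsOMinimal.dual (hM : IsOMinimal L C) : @IsOMinimal L Cᵒᵈ (dualStr L C) _ := by
  let _ := dualStr L C
  obtain ⟨h1, h2, h3, h4, h5⟩ := id hM
  refine ⟨?_, inferInstance, inferInstance, inferInstance, fun s hs => ?_⟩
  · exact DP.lt (A := (∅ : Set C)) hM (DT.var (1 : Fin 2)) (DT.var (0 : Fin 2))
  · obtain ⟨t, ht, hst⟩ := h5 s hs
    refine ⟨t, fun u hu => ?_, hst⟩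
    rcases ht u hu with ⟨a, h⟩ | ⟨a, b, h⟩ | ⟨a, h⟩ | ⟨a, h⟩ | h
    · exact Or.inl ⟨a, h⟩
    · refine Or.inr (Or.inl ⟨b, a, h.trans ?_⟩)
      ext x
      exact and_comm
    · exact Or.inr (Or.inr (Or.inr (Or.inl ⟨a, h⟩)))
    · exact Or.inr (Or.inr (Or.inl ⟨a, h⟩))
    · exact Or.inr (Or.inr (Or.inr (Or.inr h)))

/-- A definable set either contains or avoids a right neighbourhood of a point. -/
theorem right_germ (hM : IsOMinimal L C) {S : Set C} (hS : (Set.univ : Set C).Definable₁ L S)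
    (c : C) : (∃ q, c < q ∧ ∀ t, c < t → t < q → t ∈ S) ∨
      (∃ q, c < q ∧ ∀ t, c < t → t < q → t ∉ S) := by
  classical
  obtain ⟨-, h2, h3, h4, h5⟩ := hM
  obtain ⟨t, ht, rfl⟩ := h5 S hS
  clear hS
  obtain ⟨q0, hq0⟩ := exists_gt c
  induction t using Finset.induction_on with
  | empty => exact Or.inr ⟨q0, hq0, by simp⟩
  | insert u t _ ih =>
    have hu : (∃ q, c < q ∧ ∀ t, c < t → t < q → t ∈ u) ∨
        (∃ q, c < q ∧ ∀ t, c < t → t < q → t ∉ u) := by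
      rcases ht u (Finset.mem_insert_self _ _) with ⟨a, h⟩ | ⟨a, b, h⟩ | ⟨a, h⟩ | ⟨a, h⟩ | h
      · subst h
        rcases lt_or_ge c a with h | h
        · exact Or.inr ⟨a, h, fun t _ h' => by simpa using h'.ne⟩
        · exact Or.inr ⟨q0, hq0, fun t h' _ => by simpa using (h.trans_lt h').ne'⟩
      · subst h
        rcases lt_or_ge c a with h | h
        · exact Or.inr ⟨a, h, fun t _ h' h'' => h'.not_gt h''.1⟩
        · rcases lt_or_ge c b with h1 | h1
          · exact Or.inl ⟨b, h1, fun t h' h'' => ⟨h.trans_lt h', h''⟩⟩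
          · exact Or.inr ⟨q0, hq0, fun t h' _ h'' => (h1.trans_lt h').not_gt h''.2⟩
      · subst h
        rcases lt_or_ge c a with h | h
        · exact Or.inl ⟨a, h, fun t _ h' => h'⟩
        · exact Or.inr ⟨q0, hq0, fun t h' _ h'' => (h.trans_lt h').not_gt h''⟩
      · subst h
        rcases lt_or_ge c a with h | h
        · exact Or.inr ⟨a, h, fun t _ h' h'' => h'.not_gt h''⟩
        · exact Or.inl ⟨q0, hq0, fun t h' _ => h.trans_lt h'⟩
      · subst h
        exact Or.inl ⟨q0, hq0, fun t _ _ => trivial⟩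
    rw [Finset.coe_insert, Set.sUnion_insert]
    rcases hu with ⟨q, hq, h⟩ | ⟨q, hq, h⟩
    · exact Or.inl ⟨q, hq, fun t h1 h2 => Or.inl (h t h1 h2)⟩
    · rcases ih (fun u hu => ht u (Finset.mem_insert_of_mem hu)) with ⟨q', hq', h'⟩ | ⟨q', hq', h'⟩
      · exact Or.inl ⟨q', hq', fun t h1 h2 => Or.inr (h' t h1 h2)⟩
      · exact Or.inr ⟨min q q', lt_min hq hq', fun t h1 h2 h3 => h3.elim
          (h t h1 (h2.trans_le (min_le_left _ _))) (h' t h1 (h2.trans_le (min_le_right _ _)))⟩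

theorem left_germ (hM : IsOMinimal L C) {S : Set C} (hS : (Set.univ : Set C).Definable₁ L S)
    (c : C) : (∃ p, p < c ∧ ∀ t, p < t → t < c → t ∈ S) ∨
      (∃ p, p < c ∧ ∀ t, p < t → t < c → t ∉ S) := by
  have := @right_germ L Cᵒᵈ (dualStr L C) _ hM.dual S hS c
  rcases this with ⟨q, h1, h2⟩ | ⟨q, h1, h2⟩
  · exact Or.inl ⟨q, h1, fun t h3 h4 => h2 t h4 h3⟩
  · exact Or.inr ⟨q, h1, fun t h3 h4 => h2 t h4 h3⟩

theorem exists_lub (hM : IsOMinimal L C) {S : Set C} (hS : (Set.univ : Set C).Definable₁ L S)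
    (hne : S.Nonempty) (hb : BddAbove S) : ∃ e, IsLUB S e := by
  classical
  obtain ⟨-, h2, h3, h4, h5⟩ := hM
  obtain ⟨t, ht, rfl⟩ := h5 S hS
  clear hS
  induction t using Finset.induction_on with
  | empty => simp at hne
  | insert u t _ ih =>
    rw [Finset.coe_insert, Set.sUnion_insert] at hne hb ⊢
    have hbu : BddAbove u := hb.mono Set.subset_union_left
    have hu : u = ∅ ∨ ∃ e, IsLUB u e := by
      rcases ht u (Finset.mem_insert_self _ _) with ⟨a, h⟩ | ⟨a, b, h⟩ | ⟨a, h⟩ | ⟨a, h⟩ | h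
      · exact Or.inr ⟨a, h ▸ isLUB_singleton⟩
      · rcases lt_or_ge a b with h' | h'
        · exact Or.inr ⟨b, h ▸ isLUB_Ioo h'⟩
        · exact Or.inl (h.trans (Set.Ioo_eq_empty h'.not_gt))
      · exact Or.inr ⟨a, h ▸ isLUB_Iio⟩
      · exact absurd (h ▸ hbu) (not_bddAbove_Ioi a)
      · exact absurd (h ▸ hbu) not_bddAbove_univ
    have ih' := ih (fun u hu => ht u (Finset.mem_insert_of_mem hu))
    rcases hu with hu | ⟨e, he⟩
    · subst hu
      rw [Set.empty_union] at hne hb ⊢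
      exact ih' hne hb
    · rcases Set.eq_empty_or_nonempty (⋃₀ (t : Set (Set C))) with h | h
      · exact ⟨e, by rwa [h, Set.union_empty]⟩
      · obtain ⟨e', he'⟩ := ih' h (hb.mono Set.subset_union_right)
        exact ⟨_, he.union he'⟩

theorem exists_glb (hM : IsOMinimal L C) {S : Set C} (hS : (Set.univ : Set C).Definable₁ L S)
    (hne : S.Nonempty) (hb : BddBelow S) : ∃ e, IsGLB S e :=
  @exists_lub L Cᵒᵈ (dualStr L C) _ hM.dual S hS hne hb

/-- A definable subset of the line without interior is finite. -/
theorem finite_of_no_interval (hM : IsOMinimal L C) {S : Set C}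
    (hS : (Set.univ : Set C).Definable₁ L S)
    (h : ∀ a b, a < b → ¬ Set.Ioo a b ⊆ S) : S.Finite := by
  obtain ⟨-, h2, h3, h4, h5⟩ := hM
  obtain ⟨t, ht, rfl⟩ := h5 S hS
  refine Set.Finite.sUnion t.finite_toSet fun u hu => ?_
  have hsub : u ⊆ ⋃₀ (t : Set (Set C)) := Set.subset_sUnion_of_mem hu
  rcases ht u hu with ⟨a, e⟩ | ⟨a, b, e⟩ | ⟨a, e⟩ | ⟨a, e⟩ | e
  · exact e ▸ Set.finite_singleton a
  · rcases lt_or_ge a b with h' | h'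
    · exact absurd (e ▸ hsub) (h a b h')
    · rw [e, Set.Ioo_eq_empty h'.not_gt]
      exact Set.finite_empty
  · obtain ⟨b, hb⟩ := exists_lt a
    exact absurd (fun x hx => hsub (e ▸ hx.2)) (h b a hb)
  · obtain ⟨b, hb⟩ := exists_gt a
    exact absurd (fun x hx => hsub (e ▸ hx.1)) (h a b hb)
  · obtain ⟨x⟩ : Nonempty C ∨ IsEmpty C := (isEmpty_or_nonempty C).symm
    · obtain ⟨y, hy⟩ := exists_gt ‹Nonempty C›.some
      exact absurd (fun x _ => hsub (e ▸ trivial)) (h _ _ hy)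
    · exact Set.toFinite _

theorem isLUB_mem_dcl (hM : IsOMinimal L C) {S : Set C} (hS : A.Definable₁ L S) {e : C}
    (he : IsLUB S e) : e ∈ dcl L A := by
  refine mem_dcl_of_DP (DP.congr (P := fun x : Unit → C =>
    (∀ y, y ∈ S → y ≤ x ()) ∧ ∀ b, (∀ y, y ∈ S → y ≤ b) → x () ≤ b) ?_ fun x => ?_)
  · refine DP.and (DP.all (DP.imp (DP.mem hS (DT.var _)) (DP.le hM (DT.var _) (DT.var _))))
      (DP.all (DP.imp (DP.all (DP.imp (DP.mem hS (DT.var _)) (DP.le hM (DT.var _) (DT.var _))))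
        (DP.le hM (DT.var _) (DT.var _))))
  · constructor
    · intro h
      rw [h]
      exact ⟨fun y hy => he.1 hy, fun b hb => he.2 hb⟩
    · intro h
      exact le_antisymm (h.2 _ fun y hy => he.1 hy) (he.2 h.1)

theorem isGLB_mem_dcl (hM : IsOMinimal L C) {S : Set C} (hS : A.Definable₁ L S) {e : C}
    (he : IsGLB S e) : e ∈ dcl L A :=
  @isLUB_mem_dcl L Cᵒᵈ (dualStr L C) _ A hM.dual S hS e he

theorem finite_subset_dcl (hM : IsOMinimal L C) {S : Set C} (hS : A.Definable₁ L S)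
    (hf : S.Finite) : S ⊆ dcl L A := by
  obtain ⟨n, hn⟩ : ∃ n, S.ncard = n := ⟨_, rfl⟩
  induction n generalizing S with
  | zero =>
    rw [Set.ncard_eq_zero hf] at hn
    simp [hn]
  | succ n ih =>
    have hne : S.Nonempty := Set.nonempty_of_ncard_ne_zero (by omega)
    obtain ⟨e, heS, he⟩ := hf.exists_maximalFor id S hne
    have hlub : IsLUB S e := IsGreatest.isLUB ⟨heS, fun y hy => by
      rcases le_total y e with h | h
      · exact h
      · exact he hy h⟩
    have hed := isLUB_mem_dcl hM hS hlub
    have hS' : A.Definable₁ L (S \ {e}) :=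
      def₁_of_DP (DP.and (DP.mem hS (DT.var ())) (DP.not (DP.eq (DT.var ()) (DT.const hed))))
    have := ih hS' (hf.subset Set.sdiff_subset) (by
      rw [Set.ncard_sdiff_singleton_of_mem heS]; omega)
    intro x hx
    by_cases hxe : x = e
    · exact hxe ▸ hed
    · exact this ⟨hx, hxe⟩

/-- A point outside `dcl A` is interior to every `A`-definable set containing it. -/
theorem exists_nhd (hM : IsOMinimal L C) {S : Set C} (hS : A.Definable₁ L S) {c : C}
    (hc : c ∉ dcl L A) (hcS : c ∈ S) : ∃ p q, p < c ∧ c < q ∧ ∀ t, p < t → t < q → t ∈ S := by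
  by_contra hcon
  let T : Set C := {x | x ∈ S ∧ ¬ ∃ p q, p < x ∧ x < q ∧ ∀ t, p < t → t < q → t ∈ S}
  have hT : A.Definable₁ L T := by
    refine def₁_of_DP (DP.and (DP.mem hS (DT.var ())) (DP.not (DP.ex (DP.ex (DP.and
      (DP.lt hM (DT.var _) (DT.var _)) (DP.and (DP.lt hM (DT.var _) (DT.var _))
      (DP.all (DP.imp (DP.lt hM (DT.var _) (DT.var _)) (DP.imp (DP.lt hM (DT.var _) (DT.var _))
      (DP.mem hS (DT.var _)))))))))))
  refine hc (finite_subset_dcl hM hT (finite_of_no_interval hM (def₁_univ hT) ?_) ⟨hcS, hcon⟩)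
  intro a b hab hsub
  obtain ⟨-, h2, -⟩ := hM
  obtain ⟨x, hx1, hx2⟩ := exists_between hab
  exact (hsub ⟨hx1, hx2⟩).2 ⟨a, b, hx1, hx2, fun t h1 h2 => (hsub ⟨h1, h2⟩).1⟩

/-- A principal type above `β` lies in an `A`-definable set only if a whole interval does. -/
theorem PrincipalAbove.Ioc_subset (hM : IsOMinimal L C) {S : Set C} (hS : A.Definable₁ L S)
    {c β : C} (hp : PrincipalAbove L A c β) (hc : c ∉ dcl L A) (hcS : c ∈ S) :
    ∀ t, β < t → t ≤ c → t ∈ S := by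
  obtain ⟨hβ, hβc, hno⟩ := hp
  obtain ⟨-, h2, -⟩ := id hM
  have key : ∀ S : Set C, A.Definable₁ L S → (∃ q, β < q ∧ ∀ t, β < t → t < q → t ∈ S) →
      ∀ t, β < t → t ≤ c → t ∈ S := by
    intro S hS ⟨q, hq, h⟩
    let T : Set C := {x | β < x ∧ ∀ t, β < t → t ≤ x → t ∈ S}
    have hT : A.Definable₁ L T := by
      refine def₁_of_DP (DP.and (DP.lt hM (DT.const hβ) (DT.var _)) (DP.all (DP.imp
        (DP.lt hM (DT.const hβ) (DT.var _)) (DP.imp (DP.le hM (DT.var _) (DT.var _))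
        (DP.mem hS (DT.var _))))))
    by_cases hcT : c ∈ T
    · exact hcT.2
    · exfalso
      have hub : ∀ x ∈ T, x ≤ c := by
        intro x hx
        by_contra hlt
        exact hcT ⟨hβc, fun t h1 h2 => hx.2 t h1 (h2.trans (not_le.1 hlt).le)⟩
      obtain ⟨x, hx1, hx2⟩ := exists_between hq
      have hxT : x ∈ T := ⟨hx1, fun t h1 h2 => h t h1 (h2.trans_lt hx2)⟩
      obtain ⟨e, he⟩ := exists_lub hM (def₁_univ hT) ⟨x, hxT⟩ ⟨c, hub⟩
      have hed := isLUB_mem_dcl hM hT he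
      have hec : e ≠ c := fun h => hc (h ▸ hed)
      exact hno e hed ⟨hx1.trans_le (he.1 hxT), lt_of_le_of_ne (he.2 hub) hec⟩
  rcases right_germ hM (def₁_univ hS) β with h | h
  · exact key S hS h
  · have := key Sᶜ (def₁_of_DP (DP.not (DP.mem hS (DT.var ())))) h c hβc le_rfl
    exact absurd hcS this

/-- Induction along a closed interval for a definable set. -/
theorem definable_induction (hM : IsOMinimal L C) {S : Set C}
    (hS : (Set.univ : Set C).Definable₁ L S) {a b : C} (hab : a ≤ b)
    (ha : a ∈ S)
    (hstep : ∀ t, a ≤ t → t < b → (∀ s, a ≤ s → s ≤ t → s ∈ S) →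
      ∃ q, t < q ∧ ∀ s, t < s → s < q → s ∈ S)
    (hlim : ∀ t, a < t → t ≤ b → (∀ s, a ≤ s → s < t → s ∈ S) → t ∈ S) :
    b ∈ S := by
  obtain ⟨-, h2, -⟩ := id hM
  have huniv : ∀ x : C, x ∈ dcl L (Set.univ : Set C) := fun x => mem_dcl_of_mem trivial
  let T : Set C := {x | a ≤ x ∧ x ≤ b ∧ ∀ s, a ≤ s → s ≤ x → s ∈ S}
  have hT : (Set.univ : Set C).Definable₁ L T := by
    refine def₁_of_DP (DP.and (DP.le hM (DT.const (huniv _)) (DT.var _))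
      (DP.and (DP.le hM (DT.var _) (DT.const (huniv _))) (DP.all (DP.imp
        (DP.le hM (DT.const (huniv _)) (DT.var _)) (DP.imp (DP.le hM (DT.var _) (DT.var _))
        (DP.mem hS (DT.var _)))))))
  have haT : a ∈ T := ⟨le_rfl, hab, fun s h1 h2 => le_antisymm h1 h2 ▸ ha⟩
  obtain ⟨e, he⟩ := exists_lub hM hT ⟨a, haT⟩ ⟨b, fun x hx => hx.2.1⟩
  have hae : a ≤ e := he.1 haT
  have heb : e ≤ b := he.2 fun x hx => hx.2.1
  have hlt : ∀ s, a ≤ s → s < e → s ∈ S := by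
    intro s h1 h2
    obtain ⟨x, hx, hsx⟩ := (lt_isLUB_iff he).1 h2
    exact hx.2.2 s h1 hsx.le
  have heS : e ∈ S := by
    rcases hae.eq_or_lt with h | h
    · exact h ▸ ha
    · exact hlim e h heb hlt
  have hle : ∀ s, a ≤ s → s ≤ e → s ∈ S := by
    intro s h1 h2
    rcases h2.eq_or_lt with h | h
    · exact h ▸ heS
    · exact hlt s h1 h
  rcases heb.eq_or_lt with h | h
  · exact h ▸ heS
  · exfalso
    obtain ⟨q, hq, hq'⟩ := hstep e hae h hle
    obtain ⟨x, hx1, hx2⟩ := exists_between (lt_min hq h)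
    refine hx1.not_ge (he.1 ⟨hae.trans hx1.le, (hx2.trans_le (min_le_right _ _)).le, ?_⟩)
    intro s h1 h2
    rcases le_or_gt s e with h3 | h3
    · exact hle s h1 h3
    · exact hq' s h3 (h2.trans_lt (hx2.trans_le (min_le_left _ _)))

end Line

/-! ### Strict local minima -/

section Monotonicity

variable {L : FirstOrder.Language} {C : Type*} [L.Structure C] [LinearOrder C] {A B : Set C}
  {α : Type}

theorem DRel.lt (hM : IsOMinimal L C) : DRel L A (fun a b : C => a < b) :=
  DP.lt hM (DT.var _) (DT.var _)

theorem DRel.gt (hM : IsOMinimal L C) : DRel L A (fun a b : C => b < a) :=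
  DP.lt hM (DT.var _) (DT.var _)

/-- If all points of an interval are strict local minima (with respect to a strict total order
`R` on values), then on a final segment of the interval every point is a downward jump. -/
theorem jump_aux (hM : IsOMinimal L C) {R : C → C → Prop} (hR : DRel L (Set.univ : Set C) R)
    (hirr : ∀ a, ¬ R a a) (htr : ∀ a b c, R a b → R b c → R a c)
    (htri : ∀ a b, R a b ∨ a = b ∨ R b a)
    {f : C → C} (hf : D1 L (Set.univ : Set C) f) {r s : C} (hrs : r < s)
    (hmin : ∀ x, r < x → x < s → ∃ p q, p < x ∧ x < q ∧
      ∀ t, p < t → t < q → t ≠ x → R (f x) (f t)) :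
    ∃ σ, r ≤ σ ∧ σ < s ∧ ∀ b, σ < b → b < s → ∃ v,
      (∃ p, p < b ∧ ∀ t, p < t → t < b → R v (f t)) ∧
      (∃ q, b < q ∧ ∀ t, b < t → t < q → ¬ R v (f t)) := by
  obtain ⟨-, hd, -⟩ := id hM
  have hntr : ∀ a b c, ¬ R a b → ¬ R b c → ¬ R a c := by
    intro a b c h1 h2 h3
    rcases htri a b with h | h | h
    · exact h1 h
    · exact h2 (h ▸ h3)
    · exact h2 (htr _ _ _ h h3)
  -- after shrinking the interval from the left, no point is a minimum of the values to its right
  obtain ⟨r', hrr', hr's, hG⟩ : ∃ r', r ≤ r' ∧ r' < s ∧ ∀ x, r' < x → x < s →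
      ∃ y, x < y ∧ y < s ∧ ¬ R (f x) (f y) := by
    let G : Set C := {x | r < x ∧ x < s ∧ ∀ y, x < y → y < s → R (f x) (f y)}
    have hGd : (Set.univ : Set C).Definable₁ L G := by
      refine def₁_of_DP (DP.and (DP.lt hM (DT.cst r) (DT.var _)) (DP.and
        (DP.lt hM (DT.var _) (DT.cst s)) (DP.all (DP.imp (DP.lt hM (DT.var _) (DT.var _))
        (DP.imp (DP.lt hM (DT.var _) (DT.cst s))
        (hR.app (hf.app (DT.var _)) (hf.app (DT.var _))))))))
    have hGf : G.Finite := by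
      refine finite_of_no_interval hM hGd fun a b hab hsub => ?_
      obtain ⟨x, hx1, hx2⟩ := exists_between hab
      obtain ⟨h1, h2, -⟩ := hsub ⟨hx1, hx2⟩
      obtain ⟨p, q, hp, hq, h⟩ := hmin x h1 h2
      obtain ⟨x', h3, h4⟩ := exists_between (max_lt hx1 hp)
      have := (hsub ⟨(le_max_left _ _).trans_lt h3, h4.trans hx2⟩).2.2 x h4 h2
      exact hirr _ (htr _ _ _ this (h x' ((le_max_right _ _).trans_lt h3) (h4.trans hq) h4.ne))
    obtain ⟨e, he, hmax⟩ := Set.exists_max_image (insert r G) id (hGf.insert r) ⟨r, by simp⟩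
    refine ⟨e, hmax r (by simp), ?_, fun x h1 h2 => ?_⟩
    · rcases he with rfl | he
      · exact hrs
      · exact he.2.1
    · by_contra hcon
      push Not at hcon
      exact h1.not_ge (hmax x (Or.inr ⟨(hmax r (by simp)).trans_lt h1, h2, hcon⟩))
  let J : Set C := {b | ∃ v, (∃ p, p < b ∧ ∀ t, p < t → t < b → R v (f t)) ∧
      (∃ q, b < q ∧ ∀ t, b < t → t < q → ¬ R v (f t))}
  have hJd : (Set.univ : Set C).Definable₁ L J := by
    refine def₁_of_DP (DP.ex (DP.and (DP.ex (DP.and (DP.lt hM (DT.var _) (DT.var _)) (DP.all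
      (DP.imp (DP.lt hM (DT.var _) (DT.var _)) (DP.imp (DP.lt hM (DT.var _) (DT.var _))
      (hR.app (DT.var _) (hf.app (DT.var _))))))))
      (DP.ex (DP.and (DP.lt hM (DT.var _) (DT.var _)) (DP.all
      (DP.imp (DP.lt hM (DT.var _) (DT.var _)) (DP.imp (DP.lt hM (DT.var _) (DT.var _))
      (DP.not (hR.app (DT.var _) (hf.app (DT.var _)))))))))))
  have hJ : ∀ x, r' < x → x < s → ∃ b, x < b ∧ b < s ∧ b ∈ J := by
    intro x hx1 hx2
    have hSd : (Set.univ : Set C).Definable₁ L {y | ¬ R (f x) (f y)} :=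
      def₁_of_DP (DP.not (hR.app (DT.cst _) (hf.app (DT.var _))))
    have hcof : ∀ w, w < s → ∃ y, x < y ∧ y < s ∧ ¬ R (f x) (f y) ∧ w < y := by
      intro w hw
      by_contra hcon
      push Not at hcon
      let S : Set C := {y | x < y ∧ y < s ∧ ¬ R (f x) (f y)}
      have hSS : (Set.univ : Set C).Definable₁ L S :=
        def₁_of_DP (DP.and (DP.lt hM (DT.cst _) (DT.var _)) (DP.and
          (DP.lt hM (DT.var _) (DT.cst _)) (DP.mem hSd (DT.var _))))
      obtain ⟨y0, hy0⟩ : S.Nonempty := hG x hx1 hx2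
      obtain ⟨σ, hσ⟩ := exists_lub hM hSS ⟨y0, hy0⟩ ⟨w, fun y hy => hcon y hy.1 hy.2.1 hy.2.2⟩
      have hσs : σ < s := (hσ.2 fun y hy => hcon y hy.1 hy.2.1 hy.2.2).trans_lt hw
      have hxσ : x < σ := hy0.1.trans_le (hσ.1 hy0)
      obtain ⟨p, q, hp, hq, h⟩ := hmin σ (hrr'.trans_lt (hx1.trans hxσ)) hσs
      have hσS : ¬ R (f x) (f σ) := by
        obtain ⟨y, hy, hpy⟩ := (lt_isLUB_iff hσ).1 hp
        by_cases e : y = σ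
        · exact e ▸ hy.2.2
        · intro h'
          exact hy.2.2 (htr _ _ _ h' (h y hpy ((hσ.1 hy).trans_lt hq) e))
      obtain ⟨y, h1, h2, h3⟩ := hG σ (hx1.trans hxσ) hσs
      exact h1.not_ge (hσ.1 ⟨hxσ.trans h1, h2, hntr _ _ _ hσS h3⟩)
    obtain ⟨w0, hw0, hw0'⟩ : ∃ p, p < s ∧ ∀ t, p < t → t < s → ¬ R (f x) (f t) := by
      rcases left_germ hM hSd s with h | ⟨p, hp, h⟩
      · exact h
      · obtain ⟨y, h1, h2, h3, h4⟩ := hcof p hp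
        exact absurd h3 (h y h4 h2)
    let E : Set C := {b | x ≤ b ∧ b < s ∧ ∀ t, b < t → t < s → ¬ R (f x) (f t)}
    have hEd : (Set.univ : Set C).Definable₁ L E := by
      refine def₁_of_DP (DP.and (DP.le hM (DT.cst _) (DT.var _)) (DP.and
        (DP.lt hM (DT.var _) (DT.cst s)) (DP.all (DP.imp (DP.lt hM (DT.var _) (DT.var _))
        (DP.imp (DP.lt hM (DT.var _) (DT.cst s)) (DP.mem hSd (DT.var _)))))))
    have hmE : max w0 x ∈ E := ⟨le_max_right _ _, max_lt hw0 hx2,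
      fun t h1 h2 => hw0' t ((le_max_left _ _).trans_lt h1) h2⟩
    obtain ⟨b, hb⟩ := exists_glb hM hEd ⟨_, hmE⟩ ⟨x, fun e he => he.1⟩
    have hbs : b < s := (hb.1 hmE).trans_lt hmE.2.1
    have hxb : x < b := by
      obtain ⟨p, q, hp, hq, h⟩ := hmin x (hrr'.trans_lt hx1) hx2
      obtain ⟨q', h1, h2⟩ := exists_between (lt_min hq hx2)
      refine h1.trans_le (hb.2 fun e he => ?_)
      by_contra hlt
      push Not at hlt
      exact he.2.2 q' hlt (h2.trans_le (min_le_right _ _)) (h q' (hp.trans h1)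
        (h2.trans_le (min_le_left _ _)) h1.ne')
    have hright : ∀ t, b < t → t < s → ¬ R (f x) (f t) := by
      intro t h1 h2
      obtain ⟨e, he, het⟩ := (isGLB_lt_iff hb).1 h1
      exact he.2.2 t het h2
    refine ⟨b, hxb, hbs, f x, ?_, s, hbs, hright⟩
    rcases left_germ hM hSd b with ⟨p, hp, h⟩ | ⟨p, hp, h⟩
    · exfalso
      obtain ⟨p', q, hp', hq, h'⟩ := hmin b (hrr'.trans_lt (hx1.trans hxb)) hbs
      have hbS : ¬ R (f x) (f b) := by
        obtain ⟨y, h1, h2⟩ := exists_between (max_lt hp hp')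
        intro h3
        exact h y ((le_max_left _ _).trans_lt h1) h2 (htr _ _ _ h3
          (h' y ((le_max_right _ _).trans_lt h1) (h2.trans hq) h2.ne))
      refine (max_lt hp hxb).not_ge (hb.1 ⟨le_max_right _ _, (max_lt hp hxb).trans hbs, ?_⟩)
      intro t h1 h2
      rcases lt_trichotomy t b with h3 | h3 | h3
      · exact h t ((le_max_left _ _).trans_lt h1) h3
      · exact h3 ▸ hbS
      · exact hright t h3 h2
    · exact ⟨p, hp, fun t h1 h2 => not_not.1 (h t h1 h2)⟩
  rcases left_germ hM hJd s with ⟨p, hp, h⟩ | ⟨p, hp, h⟩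
  · exact ⟨max p r, le_max_right _ _, max_lt hp hrs,
      fun b h1 h2 => h b ((le_max_left _ _).trans_lt h1) h2⟩
  · exfalso
    obtain ⟨x, h1, h2⟩ := exists_between (max_lt hp hr's)
    obtain ⟨b, h3, h4, h5⟩ := hJ x ((le_max_right _ _).trans_lt h1) h2
    exact h b (((le_max_left _ _).trans_lt h1).trans h3) h4 h5

/-- An interval cannot consist of strict local minima: by `jump_aux` for the order and its reverse,
some point would be both a downward jump and an upward jump. -/
theorem no_local_min (hM : IsOMinimal L C) {R : C → C → Prop} (hR : DRel L (Set.univ : Set C) R)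
    (hirr : ∀ a, ¬ R a a) (htr : ∀ a b c, R a b → R b c → R a c)
    (htri : ∀ a b, R a b ∨ a = b ∨ R b a)
    {f : C → C} (hf : D1 L (Set.univ : Set C) f) {r s : C} (hrs : r < s)
    (hmin : ∀ x, r < x → x < s → ∃ p q, p < x ∧ x < q ∧
      ∀ t, p < t → t < q → t ≠ x → R (f x) (f t)) : False := by
  obtain ⟨-, hd, -⟩ := id hM
  obtain ⟨σ, h1, h2, h3⟩ := jump_aux hM hR hirr htr htri hf hrs hmin
  obtain ⟨τ, h4, h5, h6⟩ : ∃ τ, τ ≤ s ∧ σ < τ ∧ ∀ b, b < τ → σ < b → ∃ v,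
      (∃ p, b < p ∧ ∀ t, t < p → b < t → R v (f t)) ∧
      (∃ q, q < b ∧ ∀ t, t < b → q < t → ¬ R v (f t)) := by
    refine @jump_aux L Cᵒᵈ (dualStr L C) _ hM.dual R hR hirr htr htri f hf s σ h2 ?_
    intro x hx1 hx2
    obtain ⟨p, q, hp, hq, h⟩ := hmin x (h1.trans_lt hx2) hx1
    exact ⟨q, p, hq, hp, fun t h1 h2 h3 => h t h2 h1 h3⟩
  obtain ⟨b, h7, h8⟩ := exists_between h5
  obtain ⟨v, ⟨p, hp, hp'⟩, ⟨q, hq, hq'⟩⟩ := h3 b h7 (h8.trans_le h4)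
  obtain ⟨v', ⟨p1, hp1, hp1'⟩, ⟨q1, hq1, hq1'⟩⟩ := h6 b h8 h7
  obtain ⟨x, hx1, hx2⟩ := exists_between (max_lt hp hq1)
  obtain ⟨y, hy1, hy2⟩ := exists_between (lt_min hq hp1)
  have e1 := hp' x ((le_max_left _ _).trans_lt hx1) hx2
  have e2 := hq1' x hx2 ((le_max_right _ _).trans_lt hx1)
  have e3 := hq' y hy1 (hy2.trans_le (min_le_left _ _))
  have e4 := hp1' y (hy2.trans_le (min_le_right _ _)) hy1
  have e5 : R v v' := by
    rcases htri v v' with h | h | h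
    · exact h
    · exact absurd (h ▸ e1) e2
    · exact absurd (htr _ _ _ h e1) e2
  exact e3 (htr _ _ _ e5 e4)

end Monotonicity

/-! ### Monotonicity and continuity of unary functions -/

section Monotonicity

variable {L : FirstOrder.Language} {C : Type*} [L.Structure C] [LinearOrder C] {A B : Set C}
  {α : Type}

/-- One of the relations `<`, `>`, `=`, used to treat increasing, decreasing and constant functions
simultaneously. -/
def IsRel (R : C → C → Prop) : Prop :=
  R = (fun a b => a < b) ∨ R = (fun a b => b < a) ∨ R = (fun a b => a = b)

theorem IsRel.drel (hM : IsOMinimal L C) {R : C → C → Prop} (h : IsRel R) : DRel L A R := by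
  rcases h with rfl | rfl | rfl
  · exact DRel.lt hM
  · exact DRel.gt hM
  · exact DRel.eq

theorem IsRel.trans {R : C → C → Prop} (h : IsRel R) {a b c : C} (h1 : R a b) (h2 : R b c) :
    R a c := by
  rcases h with rfl | rfl | rfl
  · exact lt_trans h1 h2
  · exact lt_trans h2 h1
  · exact Eq.trans h1 h2

/-- Local monotonicity in the sense of `R` at the point `t`. -/
def LocR (R : C → C → Prop) (f : C → C) (t : C) : Prop :=
  ∃ p q, p < t ∧ t < q ∧ (∀ t', p < t' → t' < t → R (f t') (f t)) ∧
    ∀ t', t < t' → t' < q → R (f t) (f t')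

/-- Local monotonicity at all points of an interval implies monotonicity on the interval. -/
theorem loc_to_glob (hM : IsOMinimal L C) {R : C → C → Prop} (hR : IsRel R)
    {f : C → C} (hf : D1 L (Set.univ : Set C) f) {r s : C}
    (h : ∀ t, r < t → t < s → LocR R f t) {t t' : C} (hrt : r < t) (htt' : t < t') (hts : t' < s) :
    R (f t) (f t') := by
  obtain ⟨-, hd, -⟩ := id hM
  let S : Set C := {x | x = t ∨ R (f t) (f x)}
  have hS : (Set.univ : Set C).Definable₁ L S :=
    def₁_of_DP (DP.or (DP.eq (DT.var _) (DT.cst _))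
      ((hR.drel hM).app (DT.cst _) (hf.app (DT.var _))))
  have : t' ∈ S := by
    refine definable_induction hM hS htt'.le (Or.inl rfl) ?_ ?_
    · intro x h1 h2 h3
      obtain ⟨p, q, hp, hq, -, h4⟩ := h x (hrt.trans_le h1) (h2.trans hts)
      refine ⟨q, hq, fun s h5 h6 => Or.inr ?_⟩
      rcases h3 x h1 le_rfl with h7 | h7
      · exact h7 ▸ h4 s h5 h6
      · exact hR.trans h7 (h4 s h5 h6)
    · intro x h1 h2 h3
      obtain ⟨p, q, hp, hq, h4, -⟩ := h x (hrt.trans h1) (h2.trans_lt hts)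
      obtain ⟨y, h5, h6⟩ := exists_between (max_lt hp h1)
      have h7 := h4 y ((le_max_left _ _).trans_lt h5) h6
      rcases h3 y ((le_max_right _ _).trans h5.le) h6 with h8 | h8
      · exact Or.inr (h8 ▸ h7)
      · exact Or.inr (hR.trans h8 h7)
  rcases this with h1 | h1
  · exact absurd h1 htt'.ne'
  · exact h1

/-- The pointwise monotonicity theorem: a `B`-definable function is locally increasing, decreasing
or constant at every point outside `dcl B`. -/
theorem exists_locR (hM : IsOMinimal L C) {f : C → C} (hf : D1 L B f) {c : C}
    (hc : c ∉ dcl L B) : ∃ R : C → C → Prop, IsRel R ∧ LocR R f c := by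
  obtain ⟨-, hd, -⟩ := id hM
  have hfu : D1 L (Set.univ : Set C) f := hf.mono (Set.subset_univ _)
  have dlt : (Set.univ : Set C).Definable₁ L {t | f c < f t} :=
    def₁_of_DP (DP.lt hM (DT.cst _) (hfu.app (DT.var _)))
  have dgt : (Set.univ : Set C).Definable₁ L {t | f t < f c} :=
    def₁_of_DP (DP.lt hM (hfu.app (DT.var _)) (DT.cst _))
  obtain ⟨R1, hR1, q, hq, h1⟩ : ∃ R : C → C → Prop, IsRel R ∧
      ∃ q, c < q ∧ ∀ t, c < t → t < q → R (f c) (f t) := by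
    rcases right_germ hM dlt c with ⟨q, hq, h⟩ | ⟨q, hq, h⟩
    · exact ⟨_, Or.inl rfl, q, hq, h⟩
    · rcases right_germ hM dgt c with ⟨q', hq', h'⟩ | ⟨q', hq', h'⟩
      · exact ⟨_, Or.inr (Or.inl rfl), q', hq', h'⟩
      · refine ⟨_, Or.inr (Or.inr rfl), min q q', lt_min hq hq', fun t h1 h2 => ?_⟩
        exact le_antisymm (not_lt.1 (h' t h1 (h2.trans_le (min_le_right _ _))))
          (not_lt.1 (h t h1 (h2.trans_le (min_le_left _ _))))
  obtain ⟨R2, hR2, p, hp, h2⟩ : ∃ R : C → C → Prop, IsRel R ∧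
      ∃ p, p < c ∧ ∀ t, p < t → t < c → R (f t) (f c) := by
    rcases left_germ hM dlt c with ⟨q, hq, h⟩ | ⟨q, hq, h⟩
    · exact ⟨_, Or.inr (Or.inl rfl), q, hq, h⟩
    · rcases left_germ hM dgt c with ⟨q', hq', h'⟩ | ⟨q', hq', h'⟩
      · exact ⟨_, Or.inl rfl, q', hq', h'⟩
      · refine ⟨_, Or.inr (Or.inr rfl), max q q', max_lt hq hq', fun t h1 h2 => ?_⟩
        exact le_antisymm (not_lt.1 (h t ((le_max_left _ _).trans_lt h1) h2))
          (not_lt.1 (h' t ((le_max_right _ _).trans_lt h1) h2))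
  let X : Set C := {x | (∃ q, x < q ∧ ∀ t, x < t → t < q → R1 (f x) (f t)) ∧
    ∃ p, p < x ∧ ∀ t, p < t → t < x → R2 (f t) (f x)}
  have hX : B.Definable₁ L X := by
    refine def₁_of_DP (DP.and (DP.ex (DP.and (DP.lt hM (DT.var _) (DT.var _)) (DP.all
      (DP.imp (DP.lt hM (DT.var _) (DT.var _)) (DP.imp (DP.lt hM (DT.var _) (DT.var _))
      ((hR1.drel hM).app (hf.app (DT.var _)) (hf.app (DT.var _))))))))
      (DP.ex (DP.and (DP.lt hM (DT.var _) (DT.var _)) (DP.all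
      (DP.imp (DP.lt hM (DT.var _) (DT.var _)) (DP.imp (DP.lt hM (DT.var _) (DT.var _))
      ((hR2.drel hM).app (hf.app (DT.var _)) (hf.app (DT.var _)))))))))
  obtain ⟨r, s, hrc, hcs, hrs⟩ := exists_nhd hM hX hc ⟨⟨q, hq, h1⟩, ⟨p, hp, h2⟩⟩
  -- constancy on one side propagates to the other side
  have hl : R1 = (fun a b => a = b) → ∃ a, R2 a a := by
    intro e
    obtain ⟨⟨q1, hq1, h3⟩, -⟩ := hrs c hrc hcs
    obtain ⟨t, ht1, ht2⟩ := exists_between (lt_min hq1 hcs)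
    obtain ⟨-, p1, hp1, h4⟩ := hrs t (hrc.trans ht1) (ht2.trans_le (min_le_right _ _))
    obtain ⟨t', ht3, ht4⟩ := exists_between (max_lt hp1 ht1)
    have h5 := h4 t' ((le_max_left _ _).trans_lt ht3) ht4
    have h6 := h3 t ht1 (ht2.trans_le (min_le_left _ _))
    have h7 := h3 t' ((le_max_right _ _).trans_lt ht3) (ht4.trans (ht2.trans_le (min_le_left _ _)))
    subst e
    refine ⟨f t, ?_⟩
    have : f t' = f t := h7.symm.trans h6
    rwa [this] at h5
  have hr : R2 = (fun a b => a = b) → ∃ a, R1 a a := by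
    intro e
    obtain ⟨-, p1, hp1, h3⟩ := hrs c hrc hcs
    obtain ⟨t, ht1, ht2⟩ := exists_between (max_lt hp1 hrc)
    obtain ⟨⟨q1, hq1, h4⟩, -⟩ := hrs t ((le_max_right _ _).trans_lt ht1) (ht2.trans hcs)
    obtain ⟨t', ht3, ht4⟩ := exists_between (lt_min hq1 ht2)
    have h5 := h4 t' ht3 (ht4.trans_le (min_le_left _ _))
    have h6 := h3 t ((le_max_left _ _).trans_lt ht1) ht2
    have h7 := h3 t' (((le_max_left _ _).trans_lt ht1).trans ht3) (ht4.trans_le (min_le_right _ _))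
    subst e
    refine ⟨f t, ?_⟩
    have : f t' = f t := h7.trans h6.symm
    rwa [this] at h5
  have hmin : ∀ R : C → C → Prop, (∀ a b, R1 a b → R a b) → (∀ a b, R2 a b → R b a) →
      ∀ x, r < x → x < s → ∃ p q, p < x ∧ x < q ∧
        ∀ t, p < t → t < q → t ≠ x → R (f x) (f t) := by
    intro R e1 e2 x hx1 hx2
    obtain ⟨⟨q, hq, h3⟩, ⟨p, hp, h4⟩⟩ := hrs x hx1 hx2
    refine ⟨p, q, hp, hq, fun t h5 h6 h7 => ?_⟩
    rcases lt_or_gt_of_ne h7 with h8 | h8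
    · exact e2 _ _ (h4 t h5 h8)
    · exact e1 _ _ (h3 t h8 h6)
  by_cases heq : R1 = R2
  · subst heq
    exact ⟨R1, hR1, p, q, hp, hq, h2, h1⟩
  exfalso
  rcases hR1 with e1 | e1 | e1
  · rcases hR2 with e2 | e2 | e2
    · exact heq (e1.trans e2.symm)
    · exact no_local_min hM (R := fun a b => a < b) (DRel.lt hM) (fun _ => lt_irrefl _)
        (fun _ _ _ => lt_trans) lt_trichotomy hfu (hrc.trans hcs)
        (hmin _ (fun a b h => by rwa [e1] at h) (fun a b h => by rwa [e2] at h))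
    · obtain ⟨a, ha⟩ := hr e2
      rw [e1] at ha
      exact lt_irrefl _ ha
  · rcases hR2 with e2 | e2 | e2
    · exact no_local_min hM (R := fun a b => b < a) (DRel.gt hM) (fun _ => lt_irrefl _)
        (fun _ _ _ h h' => lt_trans h' h) (fun a b => by
          rcases lt_trichotomy a b with h | h | h
          · exact Or.inr (Or.inr h)
          · exact Or.inr (Or.inl h)
          · exact Or.inl h) hfu (hrc.trans hcs)
        (hmin _ (fun a b h => by rwa [e1] at h) (fun a b h => by rwa [e2] at h))
    · exact heq (e1.trans e2.symm)
    · obtain ⟨a, ha⟩ := hr e2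
      rw [e1] at ha
      exact lt_irrefl _ ha
  · obtain ⟨a, ha⟩ := hl e1
    rcases hR2 with e2 | e2 | e2
    · rw [e2] at ha
      exact lt_irrefl _ ha
    · rw [e2] at ha
      exact lt_irrefl _ ha
    · exact heq (e1.trans e2.symm)

/-- Continuity of a unary function at a point, in terms of the order. -/
def ContPt (f : C → C) (t : C) : Prop :=
  ∀ r s, r < f t → f t < s → ∃ p q, p < t ∧ t < q ∧ ∀ t', p < t' → t' < q → r < f t' ∧ f t' < s

theorem contPt (hM : IsOMinimal L C) {f : C → C} (hf : D1 L B f) {c : C}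
    (hc : c ∉ dcl L B) : ContPt f c := by
  obtain ⟨-, hd, -, -, -⟩ := id hM
  by_contra hcon
  obtain ⟨R, hR, hloc⟩ := exists_locR hM hf hc
  have hfu : D1 L (Set.univ : Set C) f := hf.mono (Set.subset_univ _)
  let X : Set C := {x | LocR R f x ∧ ¬ ContPt f x}
  have hX : B.Definable₁ L X := by
    refine def₁_of_DP (DP.and (DP.ex (DP.ex (DP.and (DP.lt hM (DT.var _) (DT.var _))
      (DP.and (DP.lt hM (DT.var _) (DT.var _)) (DP.and (DP.all (DP.imp
      (DP.lt hM (DT.var _) (DT.var _)) (DP.imp (DP.lt hM (DT.var _) (DT.var _))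
      ((hR.drel hM).app (hf.app (DT.var _)) (hf.app (DT.var _)))))) (DP.all (DP.imp
      (DP.lt hM (DT.var _) (DT.var _)) (DP.imp (DP.lt hM (DT.var _) (DT.var _))
      ((hR.drel hM).app (hf.app (DT.var _)) (hf.app (DT.var _)))))))))))
      (DP.not (DP.all (DP.all (DP.imp (DP.lt hM (DT.var _) (hf.app (DT.var _)))
      (DP.imp (DP.lt hM (hf.app (DT.var _)) (DT.var _)) (DP.ex (DP.ex (DP.and
      (DP.lt hM (DT.var _) (DT.var _)) (DP.and (DP.lt hM (DT.var _) (DT.var _))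
      (DP.all (DP.imp (DP.lt hM (DT.var _) (DT.var _)) (DP.imp (DP.lt hM (DT.var _) (DT.var _))
      (DP.and (DP.lt hM (DT.var _) (hf.app (DT.var _)))
      (DP.lt hM (hf.app (DT.var _)) (DT.var _))))))))))))))))
  obtain ⟨r, s, hrc, hcs, hrs⟩ := exists_nhd hM hX hc ⟨hloc, hcon⟩
  have hglob : ∀ t t', r < t → t < t' → t' < s → R (f t) (f t') := fun t t' h1 h2 h3 =>
    loc_to_glob hM hR hfu (fun t h1 h2 => (hrs t h1 h2).1) h1 h2 h3
  rcases em (∀ a, ¬ R a a) with hirr | hirr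
  · -- strictly monotone case: the image is infinite, hence contains an interval
    have hne : ∀ t t', r < t → t < s → r < t' → t' < s → f t = f t' → t = t' := by
      intro t t' h1 h2 h3 h4 h5
      rcases lt_trichotomy t t' with h | h | h
      · exact absurd (h5 ▸ hglob t t' h1 h h4) (hirr _)
      · exact h
      · exact absurd (h5 ▸ hglob t' t h3 h h2) (hirr _)
    let I : Set C := {y | ∃ t, r < t ∧ t < s ∧ f t = y}
    have hI : (Set.univ : Set C).Definable₁ L I :=
      def₁_of_DP (DP.ex (DP.and (DP.lt hM (DT.cst _) (DT.var _)) (DP.and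
        (DP.lt hM (DT.var _) (DT.cst _)) (DP.eq (hfu.app (DT.var _)) (DT.var _)))))
    obtain ⟨u, v, huv, hsub⟩ : ∃ u v, u < v ∧ Set.Ioo u v ⊆ I := by
      by_contra h
      push Not at h
      have hfin := finite_of_no_interval hM hI h
      have hinf : (Set.Ioo r s).Infinite := Set.Ioo_infinite (hrc.trans hcs)
      refine hinf (Set.Finite.of_finite_image (f := f) (hfin.subset ?_) ?_)
      · rintro _ ⟨t, ht, rfl⟩
        exact ⟨t, ht.1, ht.2, rfl⟩
      · intro t ht t' ht' e
        exact hne t t' ht.1 ht.2 ht'.1 ht'.2 e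
    obtain ⟨w, hw1, hw2⟩ := exists_between huv
    obtain ⟨x, hx1, hx2, rfl⟩ := hsub ⟨hw1, hw2⟩
    refine (hrs x hx1 hx2).2 fun r' s' h1 h2 => ?_
    obtain ⟨u1, h3, h4⟩ := exists_between (max_lt h1 hw1)
    obtain ⟨v1, h5, h6⟩ := exists_between (lt_min h2 hw2)
    obtain ⟨x1, hx3, hx4, rfl⟩ := hsub ⟨(le_max_right _ _).trans_lt h3, h4.trans hw2⟩
    obtain ⟨x2, hx5, hx6, rfl⟩ := hsub ⟨hw1.trans h5, h6.trans_le (min_le_right _ _)⟩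
    have h7 := (le_max_left _ _).trans_lt h3
    have h8 := h6.trans_le (min_le_left _ _)
    rcases hR with e | e | e
    · have hm : ∀ t t', r < t → t < s → r < t' → t' < s → f t < f t' → t < t' := by
        intro t t' g1 g2 g3 g4 g5
        rcases lt_trichotomy t t' with h | h | h
        · exact h
        · exact absurd (h ▸ g5) (lt_irrefl _)
        · have := hglob t' t g3 h g2
          rw [e] at this
          exact absurd g5 this.not_gt
      refine ⟨x1, x2, hm _ _ hx3 hx4 hx1 hx2 h4, hm _ _ hx1 hx2 hx5 hx6 h5, fun t g1 g2 => ?_⟩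
      have g3 := hglob x1 t hx3 g1 (g2.trans hx6)
      have g4 := hglob t x2 (hx3.trans g1) g2 hx6
      rw [e] at g3 g4
      exact ⟨h7.trans g3, lt_trans g4 h8⟩
    · have hm : ∀ t t', r < t → t < s → r < t' → t' < s → f t < f t' → t' < t := by
        intro t t' g1 g2 g3 g4 g5
        rcases lt_trichotomy t t' with h | h | h
        · have := hglob t t' g1 h g4
          rw [e] at this
          exact absurd g5 this.not_gt
        · exact absurd (h ▸ g5) (lt_irrefl _)
        · exact h
      refine ⟨x2, x1, hm _ _ hx1 hx2 hx5 hx6 h5, hm _ _ hx3 hx4 hx1 hx2 h4, fun t g1 g2 => ?_⟩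
      have g3 := hglob t x1 (hx5.trans g1) g2 hx4
      have g4 := hglob x2 t hx5 g1 (g2.trans hx4)
      rw [e] at g3 g4
      exact ⟨h7.trans g3, lt_trans g4 h8⟩
    · exact absurd (by rw [e]) (hirr (f x))
  · have hRe : R = (fun a b => a = b) := by
      rcases hR with e | e | e
      · exact absurd (fun a => by rw [e]; exact lt_irrefl a) hirr
      · exact absurd (fun a => by rw [e]; exact lt_irrefl a) hirr
      · exact e
    subst hRe
    refine (hrs c hrc hcs).2 fun r' s' h1 h2 => ⟨r, s, hrc, hcs, fun t h3 h4 => ?_⟩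
    have : f t = f c := by
      rcases lt_trichotomy t c with h | h | h
      · exact hglob t c h3 h hcs
      · rw [h]
      · exact (hglob c t hrc h h4).symm
    rw [this]
    exact ⟨h1, h2⟩

end Monotonicity

/-! ### Extents of definable sets and locus germs -/

section Frontier

variable {L : FirstOrder.Language} {C : Type*} [L.Structure C] [LinearOrder C] {A B : Set C}
  {α : Type}

/-- The interval to the left of `t` inside a `B`-definable set has an endpoint in `dcl B` or is
unbounded. -/
theorem left_extent (hM : IsOMinimal L C) {S : Set C} (hS : B.Definable₁ L S) {t : C}
    (ht : t ∉ dcl L B) (htS : t ∈ S) :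
    (∃ p ∈ dcl L B, p < t ∧ ∀ s, p < s → s ≤ t → s ∈ S) ∨ ∀ s, s ≤ t → s ∈ S := by
  obtain ⟨-, hd, hmn, hmx, -⟩ := id hM
  by_cases hall : ∀ s, s ≤ t → s ∈ S
  · exact Or.inr hall
  push Not at hall
  obtain ⟨s0, hs0, hs0S⟩ := hall
  left
  have hSu := def₁_univ hS
  let E : Set C := {w | w ≤ t ∧ ∀ s, w < s → s ≤ t → s ∈ S}
  have hE : (Set.univ : Set C).Definable₁ L E :=
    def₁_of_DP (DP.and (DP.le hM (DT.var _) (DT.cst _)) (DP.all (DP.imp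
      (DP.lt hM (DT.var _) (DT.var _)) (DP.imp (DP.le hM (DT.var _) (DT.cst _))
      (DP.mem hSu (DT.var _))))))
  obtain ⟨p0, q0, hp0, hq0, h0⟩ := exists_nhd hM hS ht htS
  have hp0E : p0 ∈ E := ⟨hp0.le, fun s h1 h2 => h0 s h1 (h2.trans_lt hq0)⟩
  obtain ⟨p, hp⟩ := exists_glb hM hE ⟨p0, hp0E⟩ ⟨s0, fun w hw => by
    by_contra h
    exact hs0S (hw.2 s0 (not_le.1 h) hs0)⟩
  have hpt : p < t := (hp.1 hp0E).trans_lt hp0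
  have hpS : ∀ s, p < s → s ≤ t → s ∈ S := by
    intro s h1 h2
    obtain ⟨w, hw, hws⟩ := (isGLB_lt_iff hp).1 h1
    exact hw.2 s hws h2
  refine ⟨p, ?_, hpt, hpS⟩
  let Fr : Set C := {x | (¬ ∃ u v, u < x ∧ x < v ∧ ∀ s, u < s → s < v → s ∈ S) ∧
    ¬ ∃ u v, u < x ∧ x < v ∧ ∀ s, u < s → s < v → ¬ s ∈ S}
  have hFr : B.Definable₁ L Fr := by
    refine def₁_of_DP (DP.and (DP.not (DP.ex (DP.ex (DP.and
      (DP.lt hM (DT.var _) (DT.var _)) (DP.and (DP.lt hM (DT.var _) (DT.var _))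
      (DP.all (DP.imp (DP.lt hM (DT.var _) (DT.var _)) (DP.imp (DP.lt hM (DT.var _) (DT.var _))
      (DP.mem hS (DT.var _))))))))))
      (DP.not (DP.ex (DP.ex (DP.and
      (DP.lt hM (DT.var _) (DT.var _)) (DP.and (DP.lt hM (DT.var _) (DT.var _))
      (DP.all (DP.imp (DP.lt hM (DT.var _) (DT.var _)) (DP.imp (DP.lt hM (DT.var _) (DT.var _))
      (DP.not (DP.mem hS (DT.var _)))))))))))
      )
  refine finite_subset_dcl hM hFr (finite_of_no_interval hM (def₁_univ hFr) ?_) ⟨?_, ?_⟩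
  · intro a b hab hsub
    obtain ⟨x, hx1, hx2⟩ := exists_between hab
    rcases right_germ hM hSu x with ⟨q, hq, h⟩ | ⟨q, hq, h⟩
    · obtain ⟨y, hy1, hy2⟩ := exists_between (lt_min hq hx2)
      exact (hsub ⟨hx1.trans hy1, hy2.trans_le (min_le_right _ _)⟩).1
        ⟨x, q, hy1, hy2.trans_le (min_le_left _ _), h⟩
    · obtain ⟨y, hy1, hy2⟩ := exists_between (lt_min hq hx2)
      exact (hsub ⟨hx1.trans hy1, hy2.trans_le (min_le_right _ _)⟩).2
        ⟨x, q, hy1, hy2.trans_le (min_le_left _ _), h⟩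
  · rintro ⟨u, v, hu, hv, h⟩
    refine hu.not_ge (hp.1 ⟨hu.le.trans hpt.le, fun s h1 h2 => ?_⟩)
    rcases lt_or_ge s v with h3 | h3
    · exact h s h1 h3
    · exact hpS s (hv.trans_le h3) h2
  · rintro ⟨u, v, hu, hv, h⟩
    obtain ⟨y, hy1, hy2⟩ := exists_between (lt_min hv hpt)
    exact h y (hu.trans hy1) (hy2.trans_le (min_le_left _ _))
      (hpS y hy1 (hy2.trans_le (min_le_right _ _)).le)

theorem right_extent (hM : IsOMinimal L C) {S : Set C} (hS : B.Definable₁ L S) {t : C}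
    (ht : t ∉ dcl L B) (htS : t ∈ S) :
    (∃ q ∈ dcl L B, t < q ∧ ∀ s, s < q → t ≤ s → s ∈ S) ∨ ∀ s, t ≤ s → s ∈ S :=
  @left_extent L Cᵒᵈ (dualStr L C) _ B hM.dual S hS t ht htS

end Frontier

section LocusGerm

set_option linter.unusedSectionVars false

variable {L : FirstOrder.Language} {C : Type*} [L.Structure C] [LinearOrder C]
  [TopologicalSpace C] [OrderTopology C] {A B : Set C} {α : Type} {m : ℕ}

theorem ev_iff_box (hM : IsOMinimal L C) {D : Set (Fin m → C)} {a : Fin m → C}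
    {P : (Fin m → C) → Prop} : (∀ᶠ x in 𝓝[D] a, P x) ↔
      ∃ p q : Fin m → C, (∀ l, p l < a l ∧ a l < q l) ∧
        ∀ x : Fin m → C, (∀ l, p l < x l ∧ x l < q l) → x ∈ D → P x := by
  obtain ⟨-, hd, hmn, hmx, -⟩ := id hM
  rw [eventually_nhdsWithin_iff]
  constructor
  · intro h
    rw [nhds_pi, Filter.Eventually, Filter.mem_pi'] at h
    obtain ⟨I, t, ht, hsub⟩ := h
    choose p q hpq using fun l => mem_nhds_iff_exists_Ioo_subset.1 (ht l)
    exact ⟨p, q, fun l => (hpq l).1, fun x hx hxD =>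
      hsub (fun l _ => (hpq l).2 (hx l)) hxD⟩
  · rintro ⟨p, q, h1, h2⟩
    have : Set.univ.pi (fun l => Set.Ioo (p l) (q l)) ∈ 𝓝 a :=
      set_pi_mem_nhds Set.finite_univ fun l _ => Ioo_mem_nhds (h1 l).1 (h1 l).2
    filter_upwards [this] with x hx
    exact h2 x fun l => hx l trivial

theorem DP.ev [Finite α] (hM : IsOMinimal L C) {D : Set (Fin m → C)} (hD : A.Definable L D)
    {s : Fin m → (α → C) → C} (hs : ∀ l, A.DefinableFun L (s l))
    {P : (α → C) → (Fin m → C) → Prop}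
    (hP : DP L A (fun x : α ⊕ Fin m → C => P (fun i => x (Sum.inl i)) (fun i => x (Sum.inr i)))) :
    DP L A (fun x => ∀ᶠ x' in 𝓝[D] (fun l => s l x), P x x') := by
  refine DP.congr (P := fun x => ∃ p q : Fin m → C, (∀ l, p l < s l x ∧ s l x < q l) ∧
        ∀ x' : Fin m → C, (∀ l, p l < x' l ∧ x' l < q l) → x' ∈ D → P x x') ?_
    fun x => ev_iff_box hM
  have hD' : DP L A (fun x => x ∈ D) := hD
  refine DP.exT (DP.exT (DP.and (DP.allFin fun l => DP.and (DP.lt hM (DT.var _) ?_)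
    (DP.lt hM ?_ (DT.var _))) (DP.allT (DP.imp (DP.allFin fun l => DP.and
    (DP.lt hM (DT.var _) (DT.var _)) (DP.lt hM (DT.var _) (DT.var _))) (DP.imp ?_ ?_)))))
  · exact DT.subst (hs l) (fun i => DT.var _)
  · exact DT.subst (hs l) (fun i => DT.var _)
  · exact DP.subst hD' (fun i => DT.var _)
  · exact DP.subst hP (t := Sum.elim
      (fun i x => x (Sum.inl (Sum.inl (Sum.inl i)))) (fun i x => x (Sum.inr i)))
      (by rintro (i | i) <;> exact DT.var _)

/-- Continuity along `D` is a definable condition on the base point and on parameters. -/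
theorem DP.contW [Finite α] (hM : IsOMinimal L C) {D : Set (Fin m → C)} (hD : A.Definable L D)
    {s : Fin m → (α → C) → C} (hs : ∀ l, A.DefinableFun L (s l))
    {F : (α → C) → (Fin m → C) → C}
    (hF : A.DefinableFun L
      (fun x : α ⊕ Fin m → C => F (fun i => x (Sum.inl i)) (fun i => x (Sum.inr i)))) :
    DP L A (fun x => ContinuousWithinAt (F x) D (fun l => s l x)) := by
  have h1 : A.DefinableFun L (fun x : α ⊕ Unit → C =>
      F (fun i => x (Sum.inl i)) (fun l => s l (fun i => x (Sum.inl i)))) := by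
    exact DT.subst hF (t := Sum.elim (fun i x => x (Sum.inl i))
      (fun l x => s l (fun i => x (Sum.inl i))))
      (by rintro (i | i); exacts [DT.var _, DT.subst (hs i) (fun _ => DT.var _)])
  have h2 : A.DefinableFun L (fun x : (α ⊕ Unit) ⊕ Fin m → C =>
      F (fun i => x (Sum.inl (Sum.inl i))) (fun i => x (Sum.inr i))) := by
    exact DT.subst hF (t := Sum.elim (fun i x => x (Sum.inl (Sum.inl i)))
      (fun l x => x (Sum.inr l))) (by rintro (i | i) <;> exact DT.var _)
  refine DP.congr (P := fun x =>
    (∀ r, r < F x (fun l => s l x) → ∀ᶠ x' in 𝓝[D] (fun l => s l x), r < F x x') ∧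
    (∀ r, F x (fun l => s l x) < r → ∀ᶠ x' in 𝓝[D] (fun l => s l x), F x x' < r)) ?_ ?_
  · refine DP.and (DP.all (DP.imp (DP.lt hM (DT.var _) h1) ?_))
      (DP.all (DP.imp (DP.lt hM h1 (DT.var _)) ?_))
    · exact DP.ev hM hD (fun l => DT.subst (hs l) fun _ => DT.var _)
        (P := fun x x' => x (Sum.inr ()) < F (fun i => x (Sum.inl i)) x')
        (DP.lt hM (DT.var _) h2)
    · exact DP.ev hM hD (fun l => DT.subst (hs l) fun _ => DT.var _)
        (P := fun x x' => F (fun i => x (Sum.inl i)) x' < x (Sum.inr ()))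
        (DP.lt hM h2 (DT.var _))
  · intro x
    exact tendsto_order

/-- `D` represents the germ at `a` of the locus of `tp(a/A)`: it is `A`-definable, contains `a`, and
near `a` it is contained in every `A`-definable set containing `a`. -/
def LG (L : FirstOrder.Language) {C : Type*} [L.Structure C] [TopologicalSpace C] (A : Set C)
    {m : ℕ} (D : Set (Fin m → C)) (a : Fin m → C) : Prop :=
  a ∈ D ∧ A.Definable L D ∧
    ∀ P : (Fin m → C) → Prop, DP L A P → P a → ∀ᶠ x in 𝓝[D] a, P x

theorem LG.nhds_eq {D D' : Set (Fin m → C)} {a : Fin m → C} (h : LG L A D a)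
    (h' : LG L A D' a) : 𝓝[D] a = 𝓝[D'] a :=
  le_antisymm (nhdsWithin_le_of_mem (h.2.2 (· ∈ D') h'.2.1 h'.1))
    (nhdsWithin_le_of_mem (h'.2.2 (· ∈ D) h.2.1 h.1))

theorem tendsto_init {D' : Set (Fin m → C)} {D : Set (Fin (m + 1) → C)}
    (hD : ∀ y ∈ D, Fin.init y ∈ D') (y : Fin (m + 1) → C) :
    Tendsto (fun y : Fin (m + 1) → C => (Fin.init y : Fin m → C)) (𝓝[D] y)
      (𝓝[D'] (Fin.init y)) :=
  ContinuousWithinAt.tendsto_nhdsWithin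
    (Continuous.continuousWithinAt (continuous_pi fun _ => continuous_apply _)) hD

/-- The cylinder over `D'`. -/
def cyl (D' : Set (Fin m → C)) : Set (Fin (m + 1) → C) := {y | Fin.init y ∈ D'}

theorem ev_snoc (hM : IsOMinimal L C) {D' : Set (Fin m → C)} {a' : Fin m → C} {t : C}
    {P : (Fin (m + 1) → C) → Prop} (h : ∀ᶠ y in 𝓝[cyl D'] (Fin.snoc a' t : Fin (m + 1) → C), P y) :
    ∃ p q, p < t ∧ t < q ∧
      ∀ᶠ x in 𝓝[D'] a', ∀ s, p < s → s < q → P (Fin.snoc x s) := by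
  obtain ⟨p, q, h1, h2⟩ := (ev_iff_box hM).1 h
  refine ⟨p (Fin.last m), q (Fin.last m), by simpa using (h1 (Fin.last m)).1,
    by simpa using (h1 (Fin.last m)).2, (ev_iff_box hM).2 ⟨Fin.init p, Fin.init q, fun l => ?_,
      fun x hx hxD s hs1 hs2 => h2 _ (fun i => ?_) ?_⟩⟩
  · simpa [Fin.init] using h1 l.castSucc
  · refine Fin.lastCases ?_ (fun l => ?_) i
    · simpa using ⟨hs1, hs2⟩
    · simpa [Fin.init] using hx l
  · simpa [cyl] using hxD

theorem DP.cyl {D' : Set (Fin m → C)} (hD : A.Definable L D') : A.Definable L (cyl D') :=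
  DP.subst (P := (· ∈ D')) hD (t := fun l (y : Fin (m + 1) → C) => y l.castSucc)
    fun _ => DT.var _

/-- A locus germ of the pair `(a', t)` yields a locus germ of `a'` over `A ∪ {t}`. -/
theorem LG.of_cyl (hM : IsOMinimal L C) {D' : Set (Fin m → C)} {a' : Fin m → C} {t : C}
    (h' : LG L A D' a') (h : LG L A (cyl D') (Fin.snoc a' t : Fin (m + 1) → C)) :
    LG L (A ∪ {t}) D' a' := by
  refine ⟨h'.1, Set.Definable.mono h'.2.1 Set.subset_union_left, fun P hP hPa => ?_⟩
  obtain ⟨Q, hQ, hPQ⟩ := DP.exists_params (ι := Unit) (y := fun _ => t) (by simpa using hP)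
  have hQ' : DP L A (fun y : Fin (m + 1) → C => Q (Sum.elim (fun l : Fin m => y l.castSucc)
      (fun _ => y (Fin.last m)))) := by
    refine DP.congr (DP.subst hQ (t := Sum.elim (fun (l : Fin m) y => y l.castSucc)
      (fun _ y => y (Fin.last m))) (by rintro (i | i) <;> exact DT.var _)) fun y => ?_
    have : (Sum.elim (fun l : Fin m => y l.castSucc) (fun _ : Unit => y (Fin.last m))) =
        fun i => Sum.elim (fun l (y : Fin (m + 1) → C) => y l.castSucc)
          (fun _ : Unit => fun y : Fin (m + 1) → C => y (Fin.last m)) i y := by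
      ext i; rcases i with i | i <;> rfl
    rw [this]
  obtain ⟨p, q, hp, hq, hev⟩ := ev_snoc hM (h.2.2 _ hQ' (by simpa using (hPQ a').1 hPa))
  filter_upwards [hev] with x hx
  exact (hPQ x).2 (by simpa using hx t hp hq)

end LocusGerm

/-! ### Existence of locus germs and continuity of definable functions -/

section LocusGermInduction

set_option linter.unusedSectionVars false

variable {L : FirstOrder.Language} {C : Type*} [L.Structure C] [LinearOrder C]
  [TopologicalSpace C] [OrderTopology C] {A B : Set C} {m : ℕ}

/-- `A`-definable functions of `m` variables are continuous along locus germs. -/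
def ContAll (L : FirstOrder.Language) (C : Type*) [L.Structure C] [TopologicalSpace C] (m : ℕ) :
    Prop :=
  ∀ (A : Set C) (D : Set (Fin m → C)) (a : Fin m → C) (f : (Fin m → C) → C), LG L A D a →
    A.DefinableFun L f → ContinuousWithinAt f D a

theorem mem_dcl_range (a : Fin m → C) (l : Fin m) : a l ∈ dcl L (A ∪ Set.range a) :=
  mem_dcl_of_mem (Or.inr ⟨l, rfl⟩)

theorem DP.fibre {P : (Fin (m + 1) → C) → Prop} (hP : DP L A P) (a : Fin m → C) :
    (A ∪ Set.range a).Definable₁ L {s | P (Fin.snoc a s)} :=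
  def₁_of_DP (DP.snoc_app (hP.mono Set.subset_union_left) (s := fun l _ => a l)
    (fun l => DT.const (mem_dcl_range a l)) (DT.var ()))

theorem D1.fibre {f : (Fin (m + 1) → C) → C} (hf : A.DefinableFun L f) (a : Fin m → C) :
    D1 L (A ∪ Set.range a) (fun s => f (Fin.snoc a s)) :=
  DT.snoc_app (hf.mono Set.subset_union_left) (s := fun l _ => a l)
    (fun l => DT.const (mem_dcl_range a l)) (DT.var ())

/-- If `t` is not in the definable closure of `A` and `a'`, the cylinder over a locus germ of `a'`
is a locus germ of `(a', t)`. -/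
theorem LG.cyl (hM : IsOMinimal L C) {z : C} (hz : z ∈ dcl L (∅ : Set C)) (hcont : ContAll L C m)
    {D' : Set (Fin m → C)} {a' : Fin m → C} {t : C} (h' : LG L A D' a')
    (ht : t ∉ dcl L (A ∪ Set.range a')) :
    LG L A (cyl D') (Fin.snoc a' t : Fin (m + 1) → C) := by
  refine ⟨by simpa [OMinPaper.cyl] using h'.1, DP.cyl h'.2.1, fun P hP hPa => ?_⟩
  have hti := tendsto_init (D' := D') (D := OMinPaper.cyl D') (fun y hy => hy)
    (Fin.snoc a' t : Fin (m + 1) → C)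
  rw [Fin.init_snoc] at hti
  have hlast : Tendsto (fun y : Fin (m + 1) → C => y (Fin.last m))
      (𝓝[OMinPaper.cyl D'] (Fin.snoc a' t : Fin (m + 1) → C)) (𝓝 t) := by
    have h : Tendsto (fun y : Fin (m + 1) → C => y (Fin.last m))
      (𝓝[OMinPaper.cyl D'] (Fin.snoc a' t : Fin (m + 1) → C))
      (𝓝 ((Fin.snoc a' t : Fin (m + 1) → C) (Fin.last m))) :=
      (continuous_apply (Fin.last m)).continuousAt.tendsto.mono_left nhdsWithin_le_nhds
    simpa using h
  have hS := hP.fibre a'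
  obtain ⟨lo, hlo, hloe, hloS⟩ : ∃ lo : (Fin (m + 1) → C) → Prop, DP L A lo ∧
      (∀ᶠ y in 𝓝[OMinPaper.cyl D'] (Fin.snoc a' t : Fin (m + 1) → C), lo y) ∧
      ∀ s, s ≤ t → lo (Fin.snoc a' s) → P (Fin.snoc a' s) := by
    rcases left_extent hM hS ht hPa with ⟨p, hp, hpt, h⟩ | h
    · obtain ⟨g, hg, hga⟩ := exists_fun_of_mem_dcl hz hp
      refine ⟨fun y => g (fun l => y l.castSucc) < y (Fin.last m),
        DP.lt hM (DT.subst hg fun _ => DT.var _) (DT.var _), ?_, fun s h1 h2 => h s ?_ h1⟩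
      · have := (hcont A D' a' g h' hg).tendsto.comp hti
        rw [hga] at this
        exact this.eventually_lt hlast hpt
      · simpa [hga] using h2
    · exact ⟨fun _ => True, DP.prop _, by simp, fun s hs _ => h s hs⟩
  obtain ⟨hi, hhi, hhie, hhiS⟩ : ∃ hi : (Fin (m + 1) → C) → Prop, DP L A hi ∧
      (∀ᶠ y in 𝓝[OMinPaper.cyl D'] (Fin.snoc a' t : Fin (m + 1) → C), hi y) ∧
      ∀ s, t ≤ s → hi (Fin.snoc a' s) → P (Fin.snoc a' s) := by
    rcases right_extent hM hS ht hPa with ⟨p, hp, hpt, h⟩ | h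
    · obtain ⟨g, hg, hga⟩ := exists_fun_of_mem_dcl hz hp
      refine ⟨fun y => y (Fin.last m) < g (fun l => y l.castSucc),
        DP.lt hM (DT.var _) (DT.subst hg fun _ => DT.var _), ?_, fun s h1 h2 => h s ?_ h1⟩
      · have := (hcont A D' a' g h' hg).tendsto.comp hti
        rw [hga] at this
        exact hlast.eventually_lt this hpt
      · simpa [hga] using h2
    · exact ⟨fun _ => True, DP.prop _, by simp, fun s hs _ => h s hs⟩
  have hQ : DP L A (fun x : Fin m → C => ∀ s, lo (Fin.snoc x s) → hi (Fin.snoc x s) →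
      P (Fin.snoc x s)) :=
    DP.all (DP.imp (DP.snoc_app hlo (fun _ => DT.var _) (DT.var _))
      (DP.imp (DP.snoc_app hhi (fun _ => DT.var _) (DT.var _))
        (DP.snoc_app hP (fun _ => DT.var _) (DT.var _))))
  have hQe := h'.2.2 _ hQ (fun s h1 h2 => (le_total s t).elim (fun h => hloS s h h1)
    (fun h => hhiS s h h2))
  filter_upwards [hti.eventually hQe, hloe, hhie] with y h1 h2 h3
  have := h1 (y (Fin.last m))
  rw [Fin.snoc_init_self] at this
  exact this h2 h3

/-- Continuity along a cylinder: the function is monotone in the last variable, uniformly in the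
other ones, and continuous in the other variables for nearby values of the last one. -/
theorem cont_cyl (hM : IsOMinimal L C) {z : C} (hz : z ∈ dcl L (∅ : Set C)) (hcont : ContAll L C m)
    {D' : Set (Fin m → C)} {a' : Fin m → C} {t : C} (h' : LG L A D' a')
    (ht : t ∉ dcl L (A ∪ Set.range a')) {f : (Fin (m + 1) → C) → C} (hf : A.DefinableFun L f) :
    ContinuousWithinAt f (cyl D') (Fin.snoc a' t : Fin (m + 1) → C) := by
  obtain ⟨-, hd, -⟩ := id hM
  have h1 := LG.cyl hM hz hcont h' ht
  have h2 := LG.of_cyl hM h' h1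
  have hti := tendsto_init (D' := D') (D := OMinPaper.cyl D') (fun y hy => hy)
    (Fin.snoc a' t : Fin (m + 1) → C)
  rw [Fin.init_snoc] at hti
  have hlast : Tendsto (fun y : Fin (m + 1) → C => y (Fin.last m))
      (𝓝[OMinPaper.cyl D'] (Fin.snoc a' t : Fin (m + 1) → C)) (𝓝 t) := by
    have h : Tendsto (fun y : Fin (m + 1) → C => y (Fin.last m))
      (𝓝[OMinPaper.cyl D'] (Fin.snoc a' t : Fin (m + 1) → C))
      (𝓝 ((Fin.snoc a' t : Fin (m + 1) → C) (Fin.last m))) :=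
      (continuous_apply (Fin.last m)).continuousAt.tendsto.mono_left nhdsWithin_le_nhds
    simpa using h
  let Z : (Fin (m + 1) → C) → Prop := fun y =>
    ContinuousWithinAt (fun x : Fin m → C => f (Fin.snoc x (y (Fin.last m)))) D'
      (fun l => y l.castSucc)
  have hZ : DP L A Z := DP.contW hM h'.2.1 (fun _ => DT.var _)
    (F := fun y x => f (Fin.snoc x (y (Fin.last m))))
    (DT.snoc_app hf (fun _ => DT.var _) (DT.var _))
  have hZa : Z (Fin.snoc a' t) := by
    have : ContinuousWithinAt (fun x : Fin m → C => f (Fin.snoc x t)) D' a' := by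
      refine hcont (A ∪ {t}) D' a' _ h2 (DT.snoc_app (hf.mono Set.subset_union_left)
        (fun _ => DT.var _) (DT.const (mem_dcl_of_mem (Or.inr rfl))))
    simpa [Z] using this
  obtain ⟨R, hR, hloc⟩ := exists_locR hM (D1.fibre hf a') ht
  have hct := contPt hM (D1.fibre hf a') ht
  let N : (Fin (m + 1) → C) → Prop := fun y =>
    LocR R (fun s => f (Fin.snoc (fun l : Fin m => y l.castSucc) s)) (y (Fin.last m))
  have hN : DP L A N := by
    refine DP.ex (DP.ex (DP.and (DP.lt hM (DT.var _) (DT.var _))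
      (DP.and (DP.lt hM (DT.var _) (DT.var _)) (DP.and (DP.all (DP.imp
      (DP.lt hM (DT.var _) (DT.var _)) (DP.imp (DP.lt hM (DT.var _) (DT.var _))
      ((hR.drel hM).app (DT.snoc_app hf (fun _ => DT.var _) (DT.var _))
        (DT.snoc_app hf (fun _ => DT.var _) (DT.var _)))))) (DP.all (DP.imp
      (DP.lt hM (DT.var _) (DT.var _)) (DP.imp (DP.lt hM (DT.var _) (DT.var _))
      ((hR.drel hM).app (DT.snoc_app hf (fun _ => DT.var _) (DT.var _))
        (DT.snoc_app hf (fun _ => DT.var _) (DT.var _))))))))))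
  have hNa : N (Fin.snoc a' t) := by simpa [N] using hloc
  obtain ⟨p, q, hp, hq, hev⟩ := ev_snoc hM ((h1.2.2 Z hZ hZa).and (h1.2.2 N hN hNa))
  have hmono : ∀ᶠ x in 𝓝[D'] a', ∀ s s', p < s → s < s' → s' < q →
      R (f (Fin.snoc x s)) (f (Fin.snoc x s')) := by
    filter_upwards [hev] with x hx s s' g1 g2 g3
    refine loc_to_glob hM hR (f := fun s => f (Fin.snoc x s))
      (DT.snoc_app (hf.mono (Set.subset_univ _)) (s := fun l _ => x l) (fun l => DT.cst _)
        (DT.var ())) (r := p) (s := q) (fun s e1 e2 => ?_) g1 g2 g3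
    simpa [N] using (hx s e1 e2).2
  have hZ1 : ∀ s, p < s → s < q →
      ContinuousWithinAt (fun x : Fin m → C => f (Fin.snoc x s)) D' a' := by
    intro s e1 e2
    simpa [Z] using (hev.self_of_nhdsWithin h'.1 s e1 e2).1
  have main : ∀ r s, r < f (Fin.snoc a' t) → f (Fin.snoc a' t) < s →
      ∀ᶠ y in 𝓝[OMinPaper.cyl D'] (Fin.snoc a' t : Fin (m + 1) → C), r < f y ∧ f y < s := by
    intro r s hr hs
    obtain ⟨p', q', hp', hq', hpq'⟩ := hct r s hr hs
    obtain ⟨t1, ht1, ht1'⟩ := exists_between (max_lt hp hp')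
    obtain ⟨t2, ht2, ht2'⟩ := exists_between (lt_min hq hq')
    have e1 : p < t1 := (le_max_left _ _).trans_lt ht1
    have e1' : p' < t1 := (le_max_right _ _).trans_lt ht1
    have e2 : t2 < q := ht2'.trans_le (min_le_left _ _)
    have e2' : t2 < q' := ht2'.trans_le (min_le_right _ _)
    obtain ⟨b1, b2⟩ := hpq' t1 e1' (ht1'.trans (ht2.trans e2'))
    obtain ⟨b3, b4⟩ := hpq' t2 (e1'.trans (ht1'.trans ht2)) e2'
    have c1 := hZ1 t1 e1 (ht1'.trans (ht2.trans e2))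
    have c2 := hZ1 t2 (e1.trans (ht1'.trans ht2)) e2
    have c3 : ∀ᶠ x in 𝓝[D'] a', ∀ s', t1 < s' → s' < t2 →
        r < f (Fin.snoc x s') ∧ f (Fin.snoc x s') < s := by
      filter_upwards [hmono, (tendsto_order.1 c1).1 r b1, (tendsto_order.1 c1).2 s b2,
        (tendsto_order.1 c2).1 r b3, (tendsto_order.1 c2).2 s b4] with x g0 g1 g2 g3 g4 s' i1 i2
      have j1 := g0 t1 s' e1 i1 (i2.trans e2)
      have j2 := g0 s' t2 (e1.trans i1) i2 e2
      rcases hR with e | e | e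
      · rw [e] at j1 j2
        exact ⟨lt_trans g1 j1, lt_trans j2 g4⟩
      · rw [e] at j1 j2
        exact ⟨lt_trans g3 j2, lt_trans j1 g2⟩
      · rw [e] at j1
        rw [← j1]
        exact ⟨g1, g2⟩
    filter_upwards [hti.eventually c3, hlast.eventually (lt_mem_nhds ht1'),
      hlast.eventually (gt_mem_nhds ht2)] with y k1 k2 k3
    have := k1 (y (Fin.last m)) k2 k3
    rwa [Fin.snoc_init_self] at this
  obtain ⟨-, -, hmn, hmx, -⟩ := id hM
  refine tendsto_order.2 ⟨fun r hr => ?_, fun s hs => ?_⟩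
  · obtain ⟨s, hs⟩ := exists_gt (f (Fin.snoc a' t))
    exact (main r s hr hs).mono fun y hy => hy.1
  · obtain ⟨r, hr⟩ := exists_lt (f (Fin.snoc a' t))
    exact (main r s hr hs).mono fun y hy => hy.2

/-- Locus germs exist, and definable functions are continuous along them. -/
theorem lg_exists_cont (hM : IsOMinimal L C) {z : C} (hz : z ∈ dcl L (∅ : Set C)) (m : ℕ) :
    (∀ (A : Set C) (a : Fin m → C), ∃ D, LG L A D a) ∧ ContAll L C m := by
  induction m with
  | zero =>
    refine ⟨fun A a => ⟨Set.univ, trivial, Set.definable_univ, fun P _ hPa => ?_⟩, ?_⟩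
    · exact Filter.Eventually.of_forall fun x => by rwa [Subsingleton.elim x a]
    · intro A D a f _ _
      exact (continuous_of_const fun x y => by rw [Subsingleton.elim x y]).continuousWithinAt
  | succ m ih =>
    obtain ⟨ihE, ihC⟩ := ih
    have key : ∀ (A : Set C) (a : Fin (m + 1) → C), ∃ D, LG L A D a ∧
        ∀ f : (Fin (m + 1) → C) → C, A.DefinableFun L f → ContinuousWithinAt f D a := by
      intro A a
      obtain ⟨D', hD'⟩ := ihE A (Fin.init a)
      have ea : a = Fin.snoc (Fin.init a : Fin m → C) (a (Fin.last m)) :=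
        (Fin.snoc_init_self a).symm
      by_cases ht : a (Fin.last m) ∈ dcl L (A ∪ Set.range (Fin.init a : Fin m → C))
      · obtain ⟨h, hh, hha⟩ := exists_fun_of_mem_dcl hz ht
        let D : Set (Fin (m + 1) → C) := {y | Fin.init y ∈ D' ∧ y (Fin.last m) = h (Fin.init y)}
        have hti := tendsto_init (D' := D') (D := D) (fun y hy => hy.1) a
        have hDy : ∀ y ∈ D, y = Fin.snoc (Fin.init y : Fin m → C) (h (Fin.init y)) := by
          intro y hy
          rw [← hy.2, Fin.snoc_init_self]
        have haD : a ∈ D := ⟨hD'.1, hha.symm⟩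
        refine ⟨D, ⟨haD, ?_, fun P hP hPa => ?_⟩, fun f hf => ?_⟩
        · exact DP.and (DP.cyl hD'.2.1)
            (DP.eq (DT.var _) (DT.subst hh (t := fun l (y : Fin (m + 1) → C) => y l.castSucc)
              fun _ => DT.var _))
        · have hQ : DP L A (fun x : Fin m → C => P (Fin.snoc x (h x))) :=
            DP.snoc_app hP (fun _ => DT.var _) hh
          have := hD'.2.2 _ hQ (by rwa [← hDy a haD])
          filter_upwards [hti.eventually this, self_mem_nhdsWithin] with y h1 h2
          rwa [← hDy y h2] at h1
        · have hg : A.DefinableFun L (fun x : Fin m → C => f (Fin.snoc x (h x))) :=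
            DT.snoc_app hf (fun _ => DT.var _) hh
          have h1 : ContinuousWithinAt (fun y : Fin (m + 1) → C =>
              f (Fin.snoc (Fin.init y : Fin m → C) (h (Fin.init y)))) D a :=
            (ihC A D' _ _ hD' hg).tendsto.comp hti
          refine h1.congr (fun y hy => ?_) ?_
          · rw [← hDy y hy]
          · rw [← hDy a haD]
      · refine ⟨cyl D', ?_, fun f hf => ?_⟩
        · have := LG.cyl hM hz ihC hD' ht
          rwa [← ea] at this
        · have := cont_cyl hM hz ihC hD' ht hf
          rwa [← ea] at this
    refine ⟨fun A a => (key A a).imp fun D h => h.1, fun A D a f hD hf => ?_⟩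
    obtain ⟨D₁, h1, h2⟩ := key A a
    have := h2 f hf
    rw [ContinuousWithinAt] at this ⊢
    rwa [hD.nhds_eq h1]

/-- A locus germ of `a` over `A` remains one after adding a parameter `t` not in the definable
closure of `A` and `a`. -/
theorem LG.add_param (hM : IsOMinimal L C) {z : C} (hz : z ∈ dcl L (∅ : Set C))
    {D : Set (Fin m → C)} {a : Fin m → C} {t : C} (h : LG L A D a)
    (ht : t ∉ dcl L (A ∪ Set.range a)) : LG L (A ∪ {t}) D a :=
  LG.of_cyl hM h (LG.cyl hM hz (lg_exists_cont hM hz m).2 h ht)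

end LocusGermInduction

/-! ### Principal types -/

section PrincipalTypes

variable {L : FirstOrder.Language} {C : Type*} [L.Structure C] [LinearOrder C] {A B : Set C}

theorem principalAbove_iff {b x β : C} (hb : b ∈ dcl L B) :
    PrincipalAbove L (B ∪ {b}) x β ↔ PrincipalAbove L B x β := by
  simp only [PrincipalAbove, dcl_union_singleton hb]

theorem nearPosInf_iff {b x : C} (hb : b ∈ dcl L B) :
    NearPosInf L (B ∪ {b}) x ↔ NearPosInf L B x := by
  simp only [NearPosInf, dcl_union_singleton hb]

/-- Under interdefinability `dcl B` is densely ordered: a successor of `b` in `dcl B` would be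
principal above `b` and its image would be an element of `dcl B` near `+∞`. -/
theorem no_succ (hI : AllPrincipalInterdef L C) {b x : C} (hb : b ∈ dcl L B)
    (hx : x ∈ dcl L B) (hbx : b < x) (hno : ∀ d ∈ dcl L B, d ∉ Set.Ioo b x) : False := by
  obtain ⟨⟨f, hf, hfx⟩, -⟩ := (hI B).1 b
  have hf' : D1 L B f := (D1.of_defFun₁ hf).drop_one hb
  have h := (nearPosInf_iff hb).1 (hfx x ((principalAbove_iff hb).2 ⟨hb, hbx, hno⟩))
  exact lt_irrefl _ (h _ (hf'.apply_mem hx))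

theorem PrincipalAbove.notMem (hI : AllPrincipalInterdef L C) {c β : C}
    (h : PrincipalAbove L B c β) : c ∉ dcl L B :=
  fun hc => no_succ hI h.1 hc h.2.1 h.2.2

theorem PrincipalAbove.transfer (hI : AllPrincipalInterdef L C) {β z : C} (hβ : β ∈ dcl L B)
    (hz : z ∈ dcl L B) : ∃ v, D1 L B v ∧ ∀ x, PrincipalAbove L B x β →
      PrincipalAbove L B (v x) z := by
  obtain ⟨⟨f, hf, hfx⟩, -⟩ := (hI B).1 β
  obtain ⟨-, ⟨g, hg, hgx⟩⟩ := (hI B).1 z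
  have hf' : D1 L B f := (D1.of_defFun₁ hf).drop_one hβ
  have hg' : D1 L B g := (D1.of_defFun₁ hg).drop_one hz
  refine ⟨fun x => g (f x), hg'.app hf', fun x hx => ?_⟩
  exact (principalAbove_iff hz).1 (hgx _ ((nearPosInf_iff hz).2
    ((nearPosInf_iff hβ).1 (hfx x ((principalAbove_iff hβ).2 hx)))))

/-- A definable map between realizations of principal types above `β` and above `z` is not
decreasing. -/
theorem not_decreasing (hM : IsOMinimal L C) (hI : AllPrincipalInterdef L C) {c β z : C}
    (hz : z ∈ dcl L B) (hc : PrincipalAbove L B c β) {u : C → C} (hu : D1 L B u)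
    (huc : PrincipalAbove L B (u c) z)
    (hdec : ∀ t t', β < t → t < t' → t' ≤ c → u t' < u t)
    (hloc : LocR (fun a b => b < a) u c) : False := by
  obtain ⟨-, hd, -⟩ := id hM
  have hcB := hc.notMem hI
  have hucB := huc.notMem hI
  have hβ := hc.1
  by_cases hw : ∃ w ∈ dcl L B, z < w
  · -- the limit of `u` at `β` is the successor of `z` in `dcl B`
    let E : Set C := {y | ∃ t1, β < t1 ∧ ∀ t, β < t → t < t1 → u t ≤ y}
    have hE : B.Definable₁ L E :=
      def₁_of_DP (DP.ex (DP.and (DP.lt hM (DT.const hβ) (DT.var _)) (DP.all (DP.imp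
        (DP.lt hM (DT.const hβ) (DT.var _)) (DP.imp (DP.lt hM (DT.var _) (DT.var _))
        (DP.le hM (hu.app (DT.var _)) (DT.var _)))))))
    have hlow : ∀ y ∈ E, u c ≤ y := by
      rintro y ⟨t1, ht1, h⟩
      obtain ⟨t, h1, h2⟩ := exists_between (lt_min ht1 hc.2.1)
      exact (hdec t c h1 (h2.trans_le (min_le_right _ _)) le_rfl).le.trans
        (h t h1 (h2.trans_le (min_le_left _ _)))
    have hwE : ∀ w ∈ dcl L B, z < w → w ∈ E := by
      intro w hwB hzw
      have h1 : u c < w := by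
        rcases lt_trichotomy (u c) w with h | h | h
        · exact h
        · exact absurd (h ▸ hwB) hucB
        · exact absurd ⟨hzw, h⟩ (huc.2.2 w hwB)
      have h2 : B.Definable₁ L {t | u t < w} :=
        def₁_of_DP (DP.lt hM (hu.app (DT.var _)) (DT.const hwB))
      exact ⟨c, hc.2.1, fun t h3 h4 => (hc.Ioc_subset hM h2 hcB h1 t h3 h4.le).le⟩
    obtain ⟨w, hwB, hzw⟩ := hw
    obtain ⟨e, he⟩ := exists_glb hM (def₁_univ hE) ⟨w, hwE w hwB hzw⟩ ⟨u c, hlow⟩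
    refine no_succ hI hz (isGLB_mem_dcl hM hE he) (huc.2.1.trans_le (he.2 hlow)) ?_
    intro d hdB hdI
    exact hdI.2.not_ge (he.1 (hwE d hdB hdI.1))
  · push Not at hw
    have hall : ∀ t, z < t → PrincipalAbove L B t z := fun t ht =>
      ⟨hz, ht, fun d hd' h => h.1.not_ge (hw d hd')⟩
    have hβz : β = z := by
      by_contra hne
      have hlt : β < z := lt_of_le_of_ne (hw β hβ) hne
      obtain ⟨⟨f, hf, hfx⟩, -⟩ := (hI B).2.1 z z
      rw [Set.pair_eq_singleton] at hf hfx
      have hf' : D1 L B f := (D1.of_defFun₁ hf).drop_one hz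
      have hfx' : ∀ t, z < t → PrincipalBelow L B (f t) z := by
        intro t ht
        have := hfx t ((principalAbove_iff hz).2 (hall t ht))
        simpa only [Set.mem_ofPred_eq, PrincipalBelow, dcl_union_singleton hz] using this
      let I : Set C := {y | ∃ t, z < t ∧ f t = y}
      have hId : B.Definable₁ L I :=
        def₁_of_DP (DP.ex (DP.and (DP.lt hM (DT.const hz) (DT.var _))
          (DP.eq (hf'.app (DT.var _)) (DT.var _))))
      have huI : f (u c) ∈ I := ⟨u c, huc.2.1, rfl⟩
      obtain ⟨e, he⟩ := exists_glb hM (def₁_univ hId) ⟨_, huI⟩ ⟨β, by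
        rintro _ ⟨t, ht, rfl⟩
        by_contra h
        exact (hfx' t ht).2.2 β hβ ⟨not_le.1 h, hlt⟩⟩
      refine no_succ hI (isGLB_mem_dcl hM hId he) hz
        ((he.1 huI).trans_lt (hfx' _ huc.2.1).2.1) ?_
      intro d hdB hdI
      obtain ⟨y, ⟨t, ht, rfl⟩, hy⟩ := (isGLB_lt_iff he).1 hdI.1
      exact (hfx' t ht).2.2 d hdB ⟨hy, hdI.2⟩
    subst hβz
    -- there is a single 1-type to the right of `β`
    have hone : ∀ S : Set C, B.Definable₁ L S → ∀ s, β < s → s ∈ S → ∀ t, β < t → t ∈ S := by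
      intro S hS s hs hsS t ht
      by_contra htS
      have h1 := (hall s hs).Ioc_subset hM hS ((hall s hs).notMem hI) hsS (min s t)
        (lt_min hs ht) (min_le_left _ _)
      have h2 := (hall t ht).Ioc_subset hM (S := Sᶜ) (def₁_of_DP (DP.not (DP.mem hS (DT.var ()))))
        ((hall t ht).notMem hI) htS (min s t) (lt_min hs ht) (min_le_right _ _)
      exact h2 h1
    have hX : B.Definable₁ L {t | LocR (fun a b => b < a) u t} := by
      refine def₁_of_DP (DP.ex (DP.ex (DP.and (DP.lt hM (DT.var _) (DT.var _))
        (DP.and (DP.lt hM (DT.var _) (DT.var _)) (DP.and (DP.all (DP.imp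
        (DP.lt hM (DT.var _) (DT.var _)) (DP.imp (DP.lt hM (DT.var _) (DT.var _))
        (DP.lt hM (hu.app (DT.var _)) (hu.app (DT.var _)))))) (DP.all (DP.imp
        (DP.lt hM (DT.var _) (DT.var _)) (DP.imp (DP.lt hM (DT.var _) (DT.var _))
        (DP.lt hM (hu.app (DT.var _)) (hu.app (DT.var _)))))))))))
    have hanti : ∀ t t', β < t → t < t' → u t' < u t := by
      intro t t' h1 h2
      obtain ⟨-, -, -, hmx, -⟩ := id hM
      obtain ⟨s, hs⟩ := exists_gt t'
      exact loc_to_glob hM (R := fun a b => b < a) (Or.inr (Or.inl rfl)) (hu.mono (subset_univ _))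
        (r := β) (s := s) (fun t h3 _ => hone _ hX c hc.2.1 hloc t h3) h1 h2 hs
    have hpos : ∀ t, β < t → β < u t := fun t ht =>
      hone {t | β < u t} (def₁_of_DP (DP.lt hM (DT.const hβ) (hu.app (DT.var _)))) c hc.2.1
        huc.2.1 t ht
    have hT : B.Definable₁ L {t | t < u t} :=
      def₁_of_DP (DP.lt hM (DT.var _) (hu.app (DT.var _)))
    by_cases hcT : c < u c
    · have h1 := hone _ hT c hc.2.1 hcT (u c) huc.2.1
      exact (hanti c (u c) hc.2.1 hcT).not_gt h1
    · obtain ⟨t, h1, h2⟩ := exists_between huc.2.1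
      have h3 := hanti t c h1 (h2.trans_le (not_lt.1 hcT))
      exact hcT (hone _ hT t h1 (h2.trans h3) c hc.2.1)

/-- A definable map between realizations of principal types above `β` and above `z` is increasing,
and tends to `z` at `β`. -/
theorem increasing_of_principal (hM : IsOMinimal L C) (hI : AllPrincipalInterdef L C) {c β z : C}
    (hz : z ∈ dcl L B) (hc : PrincipalAbove L B c β) {u : C → C} (hu : D1 L B u)
    (huc : PrincipalAbove L B (u c) z) :
    (∀ t t', β < t → t < t' → t' ≤ c → u t < u t') ∧ (∀ t, β < t → t ≤ c → z < u t) ∧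
      ∀ ε, z < ε → ∃ t, β < t ∧ t < c ∧ u t < ε := by
  obtain ⟨-, hd, -⟩ := id hM
  have hcB := hc.notMem hI
  have hucB := huc.notMem hI
  have hβ := hc.1
  obtain ⟨R, hR, hloc⟩ := exists_locR hM hu hcB
  have hX : B.Definable₁ L {t | LocR R u t} := by
    refine def₁_of_DP (DP.ex (DP.ex (DP.and (DP.lt hM (DT.var _) (DT.var _))
      (DP.and (DP.lt hM (DT.var _) (DT.var _)) (DP.and (DP.all (DP.imp
      (DP.lt hM (DT.var _) (DT.var _)) (DP.imp (DP.lt hM (DT.var _) (DT.var _))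
      ((hR.drel hM).app (hu.app (DT.var _)) (hu.app (DT.var _)))))) (DP.all (DP.imp
      (DP.lt hM (DT.var _) (DT.var _)) (DP.imp (DP.lt hM (DT.var _) (DT.var _))
      ((hR.drel hM).app (hu.app (DT.var _)) (hu.app (DT.var _)))))))))))
  obtain ⟨p, q, hp, hq, hpq⟩ := exists_nhd hM hX hcB hloc
  have hmono : ∀ t t', β < t → t < t' → t' ≤ c → R (u t) (u t') := by
    intro t t' h1 h2 h3
    refine loc_to_glob hM hR (hu.mono (subset_univ _)) (r := β) (s := q) (fun t h4 h5 => ?_) h1 h2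
      (h3.trans_lt hq)
    rcases le_or_gt t c with h6 | h6
    · exact hc.Ioc_subset hM hX hcB hloc t h4 h6
    · exact hpq t (hp.trans h6) h5
  have hpos : ∀ t, β < t → t ≤ c → z < u t := hc.Ioc_subset hM (S := {t | z < u t})
    (def₁_of_DP (DP.lt hM (DT.const hz) (hu.app (DT.var _)))) hcB huc.2.1
  rcases hR with e | e | e
  · subst e
    refine ⟨hmono, hpos, fun ε hε => ?_⟩
    by_contra hcon
    push Not at hcon
    let E : Set C := {y | ∃ t1, β < t1 ∧ ∀ t, β < t → t < t1 → y ≤ u t}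
    have hE : B.Definable₁ L E :=
      def₁_of_DP (DP.ex (DP.and (DP.lt hM (DT.const hβ) (DT.var _)) (DP.all (DP.imp
        (DP.lt hM (DT.const hβ) (DT.var _)) (DP.imp (DP.lt hM (DT.var _) (DT.var _))
        (DP.le hM (DT.var _) (hu.app (DT.var _))))))))
    have hup : ∀ y ∈ E, y ≤ u c := by
      rintro y ⟨t1, ht1, h⟩
      obtain ⟨t, h1, h2⟩ := exists_between (lt_min ht1 hc.2.1)
      exact (h t h1 (h2.trans_le (min_le_left _ _))).trans
        (hmono t c h1 (h2.trans_le (min_le_right _ _)) le_rfl).le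
    have hεE : ε ∈ E := ⟨c, hc.2.1, hcon⟩
    obtain ⟨e, he⟩ := exists_lub hM (def₁_univ hE) ⟨ε, hεE⟩ ⟨u c, hup⟩
    have heB := isLUB_mem_dcl hM hE he
    exact huc.2.2 e heB ⟨hε.trans_le (he.1 hεE),
      lt_of_le_of_ne (he.2 hup) fun h => hucB (h ▸ heB)⟩
  · subst e
    exact (not_decreasing hM hI hz hc hu huc hmono hloc).elim
  · subst e
    refine absurd (mem_dcl_of_DP (DP.congr (P := fun x : Unit → C => ∃ t1, β < t1 ∧
      ∀ t, β < t → t < t1 → u t = x ()) ?_ fun x => ⟨fun h => ?_, ?_⟩)) hucB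
    · exact DP.ex (DP.and (DP.lt hM (DT.const hβ) (DT.var _)) (DP.all (DP.imp
        (DP.lt hM (DT.const hβ) (DT.var _)) (DP.imp (DP.lt hM (DT.var _) (DT.var _))
        (DP.eq (hu.app (DT.var _)) (DT.var _))))))
    · exact ⟨c, hc.2.1, fun t h1 h2 => (hmono t c h1 h2 le_rfl).trans h.symm⟩
    · rintro ⟨t1, ht1, h⟩
      obtain ⟨t, h1, h2⟩ := exists_between (lt_min ht1 hc.2.1)
      exact (h t h1 (h2.trans_le (min_le_left _ _))).symm.trans
        (hmono t c h1 (h2.trans_le (min_le_right _ _)) le_rfl)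

end PrincipalTypes

/-! ### The set C⁰ and its limit points -/

section LimitSet

set_option linter.unusedSectionVars false

variable {L : FirstOrder.Language} {C : Type*} [L.Structure C] [LinearOrder C]
  [TopologicalSpace C] [OrderTopology C] {A B : Set C} {m n : ℕ} {α : Type}

/-- `U (x, ·)` is strictly increasing on the interval `(b x, t]`. -/
def Inc (b : (Fin m → C) → C) (U : (Fin (m + 1) → C) → C) (x : Fin m → C) (t : C) : Prop :=
  ∀ s s', b x < s → s < s' → s' ≤ t → U (Fin.snoc x s) < U (Fin.snoc x s')

/-- The point `x` is good for the functions `b` and `U`: `U (x, ·)` increases from `z` to the right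
of `b x`, the functions `b` and `U (·, r)`, for a coinitial set of `r > b x`, are continuous along
`D` at `x`, and `U (x', t)` is close to `z`, uniformly in `x' ∈ D` near `x`, for `t` close to
`b x'`. -/
structure Good (z : C) (D : Set (Fin m → C)) (b : (Fin m → C) → C) (U : (Fin (m + 1) → C) → C)
    (x : Fin m → C) : Prop where
  small : ∀ ε, z < ε → ∀ ε', b x < ε' → ∃ t, b x < t ∧ t < ε' ∧ Inc b U x t ∧
    z < U (Fin.snoc x t) ∧ U (Fin.snoc x t) ≤ ε
  cont : ContinuousWithinAt b D x
  cont_fibre : ∀ ε', b x < ε' → ∃ r, b x < r ∧ r < ε' ∧ z < U (Fin.snoc x r) ∧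
    ContinuousWithinAt (fun x' : Fin m → C => U (Fin.snoc x' r)) D x
  uniform : ∀ ε, z < ε → ∃ s, b x < s ∧ ∀ᶠ x' in 𝓝[D] x, ∀ t, b x' < t → t < s →
    U (Fin.snoc x' t) < ε

theorem DP.inc [Finite α] (hM : IsOMinimal L C) {b : (Fin m → C) → C} (hb : A.DefinableFun L b)
    {U : (Fin (m + 1) → C) → C} (hU : A.DefinableFun L U) {s : Fin m → (α → C) → C}
    (hs : ∀ l, A.DefinableFun L (s l)) {t : (α → C) → C} (ht : A.DefinableFun L t) :
    DP L A (fun x => Inc b U (fun l => s l x) (t x)) := by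
  have hs1 : ∀ l, A.DefinableFun L
      (fun x : (α ⊕ Unit) ⊕ Unit → C => s l (fun i => x (Sum.inl (Sum.inl i)))) :=
    fun l => DT.subst (hs l) fun _ => DT.var _
  have ht1 : A.DefinableFun L
      (fun x : (α ⊕ Unit) ⊕ Unit → C => t (fun i => x (Sum.inl (Sum.inl i)))) :=
    DT.subst ht fun _ => DT.var _
  exact DP.all (DP.all (DP.imp (DP.lt hM (DT.subst hb hs1) (DT.var _))
    (DP.imp (DP.lt hM (DT.var _) (DT.var _)) (DP.imp (DP.le hM (DT.var _) ht1)
      (DP.lt hM (DT.snoc_app hU hs1 (DT.var _)) (DT.snoc_app hU hs1 (DT.var _)))))))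

theorem DP.good (hM : IsOMinimal L C) {z : C} (hz : z ∈ dcl L A) {D : Set (Fin m → C)}
    (hD : A.Definable L D) {b : (Fin m → C) → C} (hb : A.DefinableFun L b)
    {U : (Fin (m + 1) → C) → C} (hU : A.DefinableFun L U) : DP L A (Good z D b U) := by
  refine DP.congr (P := fun x => (∀ ε, z < ε → ∀ ε', b x < ε' → ∃ t, b x < t ∧ t < ε' ∧
    Inc b U x t ∧ z < U (Fin.snoc x t) ∧ U (Fin.snoc x t) ≤ ε) ∧ ContinuousWithinAt b D x ∧
    (∀ ε', b x < ε' → ∃ r, b x < r ∧ r < ε' ∧ z < U (Fin.snoc x r) ∧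
    ContinuousWithinAt (fun x' : Fin m → C => U (Fin.snoc x' r)) D x) ∧
    (∀ ε, z < ε → ∃ s, b x < s ∧ ∀ᶠ x' in 𝓝[D] x, ∀ t, b x' < t → t < s →
    U (Fin.snoc x' t) < ε)) ?_ fun x => ⟨fun h => ⟨h.1, h.2, h.3, h.4⟩,
      fun h => ⟨h.1, h.2.1, h.2.2.1, h.2.2.2⟩⟩
  refine DP.and ?_ (DP.and ?_ (DP.and ?_ ?_))
  · exact DP.all (DP.imp (DP.lt hM (DT.const hz) (DT.var _)) (DP.all (DP.imp
      (DP.lt hM (DT.subst hb fun _ => DT.var _) (DT.var _)) (DP.ex (DP.and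
      (DP.lt hM (DT.subst hb fun _ => DT.var _) (DT.var _)) (DP.and
      (DP.lt hM (DT.var _) (DT.var _)) (DP.and (DP.inc hM hb hU (fun _ => DT.var _) (DT.var _))
      (DP.and (DP.lt hM (DT.const hz) (DT.snoc_app hU (fun _ => DT.var _) (DT.var _)))
      (DP.le hM (DT.snoc_app hU (fun _ => DT.var _) (DT.var _)) (DT.var _))))))))))
  · exact DP.contW hM hD (fun _ => DT.var _) (F := fun _ x' => b x')
      (DT.subst hb fun _ => DT.var _)
  · exact DP.all (DP.imp (DP.lt hM (DT.subst hb fun _ => DT.var _) (DT.var _)) (DP.ex (DP.and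
      (DP.lt hM (DT.subst hb fun _ => DT.var _) (DT.var _)) (DP.and
      (DP.lt hM (DT.var _) (DT.var _)) (DP.and
      (DP.lt hM (DT.const hz) (DT.snoc_app hU (fun _ => DT.var _) (DT.var _)))
      (DP.contW hM hD (fun _ => DT.var _)
        (F := fun (w : (Fin m ⊕ Unit) ⊕ Unit → C) x' => U (Fin.snoc x' (w (Sum.inr ()))))
        (DT.snoc_app hU (fun _ => DT.var _) (DT.var _))))))))
  · exact DP.all (DP.imp (DP.lt hM (DT.const hz) (DT.var _)) (DP.ex (DP.and
      (DP.lt hM (DT.subst hb fun _ => DT.var _) (DT.var _))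
      (DP.ev hM hD (fun _ => DT.var _)
        (P := fun (w : (Fin m ⊕ Unit) ⊕ Unit → C) x' => ∀ t, b x' < t → t < w (Sum.inr ()) →
          U (Fin.snoc x' t) < w (Sum.inl (Sum.inr ())))
        (DP.all (DP.imp (DP.lt hM (DT.subst hb fun _ => DT.var _) (DT.var _))
          (DP.imp (DP.lt hM (DT.var _) (DT.var _))
          (DP.lt hM (DT.snoc_app hU (fun _ => DT.var _) (DT.var _)) (DT.var _)))))))))

/-- If `c` is principal above `b a` and `U (a, c)` is principal above `z`, then `a` is good and
`U (a, ·)` is increasing up to `c`. -/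
theorem good_of_principal (hM : IsOMinimal L C) (hI : AllPrincipalInterdef L C) {z : C}
    (hz : z ∈ dcl L (∅ : Set C)) {D : Set (Fin m → C)} {a : Fin m → C} (hD : LG L A D a)
    {b : (Fin m → C) → C} (hb : A.DefinableFun L b)
    {U : (Fin (m + 1) → C) → C} (hU : A.DefinableFun L U) {c : C}
    (hc : PrincipalAbove L (A ∪ Set.range a) c (b a))
    (hUc : PrincipalAbove L (A ∪ Set.range a) (U (Fin.snoc a c)) z) :
    Good z D b U a ∧ Inc b U a c := by
  obtain ⟨-, hd, hmn, hmx, -⟩ := id hM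
  have hcB := hc.notMem hI
  have hcont := (lg_exists_cont hM hz m).2
  have hzB : z ∈ dcl L (A ∪ Set.range a) := dcl_mono (Set.empty_subset _) hz
  have hDc := LG.add_param hM hz hD hcB
  have hcc : c ∈ dcl L (A ∪ {c}) := mem_dcl_of_mem (Or.inr rfl)
  obtain ⟨hinc, hpos, hlim⟩ := increasing_of_principal hM hI hzB hc (D1.fibre hU a) hUc
  have hincc : Inc b U a c := hinc
  have hW : (A ∪ Set.range a).Definable₁ L
      {r | ContinuousWithinAt (fun x' : Fin m → C => U (Fin.snoc x' r)) D a} :=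
    def₁_of_DP (DP.contW hM (hD.2.1.mono Set.subset_union_left) (s := fun l _ => a l)
      (fun l => DT.const (mem_dcl_range a l))
      (F := fun (w : Unit → C) x' => U (Fin.snoc x' (w ())))
      (DT.snoc_app (hU.mono Set.subset_union_left) (fun _ => DT.var _) (DT.var _)))
  have hWc : ∀ r, b a < r → r ≤ c →
      ContinuousWithinAt (fun x' : Fin m → C => U (Fin.snoc x' r)) D a :=
    hc.Ioc_subset hM hW hcB (hcont (A ∪ {c}) D a _ hDc
      (DT.snoc_app (hU.mono Set.subset_union_left) (fun _ => DT.var _) (DT.const hcc)))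
  refine ⟨⟨fun ε hε ε' hε' => ?_, hcont A D a b hD hb, fun ε' hε' => ?_, fun ε hε => ?_⟩, hincc⟩
  · obtain ⟨t0, h1, h2, h3⟩ := hlim ε hε
    obtain ⟨t, h4, h5⟩ := exists_between (lt_min h1 hε')
    have h6 := h5.trans_le (min_le_left _ _)
    exact ⟨t, h4, h5.trans_le (min_le_right _ _),
      fun s s' e1 e2 e3 => hinc s s' e1 e2 (e3.trans (h6.trans h2).le), hpos t h4 (h6.trans h2).le,
      ((hinc t t0 h4 h6 h2.le).trans h3).le⟩
  · obtain ⟨r, h4, h5⟩ := exists_between (lt_min hc.2.1 hε')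
    have h6 := (h5.trans_le (min_le_left _ _)).le
    exact ⟨r, h4, h5.trans_le (min_le_right _ _), hpos r h4 h6, hWc r h4 h6⟩
  · obtain ⟨t0, h1, h2, h3⟩ := hlim ε hε
    have hQ : DP L (A ∪ {c}) (fun x : Fin m → C => Inc b U x c) :=
      DP.inc hM (hb.mono Set.subset_union_left) (hU.mono Set.subset_union_left)
        (fun _ => DT.var _) (DT.const hcc)
    refine ⟨t0, h1, ?_⟩
    filter_upwards [hDc.2.2 _ hQ hincc, (tendsto_order.1 (hWc t0 h1 h2.le)).2 ε h3]
      with x' e1 e2 t e3 e4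
    exact (e1 t t0 e3 e4 h2.le).trans e2

/-- The set of `y` whose initial part `x` is a good point of `D` and whose remaining coordinates
`y j` satisfy `b j x < y j` and `z < U j (x, y j) ≤ U k (x, y k)`, with `U j (x, ·)` increasing up
to `y j`. -/
def LimSet (z : C) (k : Fin n) (D : Set (Fin k → C)) (b : Fin n → (Fin k → C) → C)
    (U : Fin n → (Fin (k + 1) → C) → C) : Set (Fin n → C) :=
  {y | Fin.take k k.isLt.le y ∈ D ∧ ∀ j, k ≤ j →
    Good z D (b j) (U j) (Fin.take k k.isLt.le y) ∧
    b j (Fin.take k k.isLt.le y) < y j ∧ Inc (b j) (U j) (Fin.take k k.isLt.le y) (y j) ∧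
    z < U j (Fin.snoc (Fin.take k k.isLt.le y) (y j)) ∧
    U j (Fin.snoc (Fin.take k k.isLt.le y) (y j)) ≤ U k (Fin.snoc (Fin.take k k.isLt.le y) (y k))}

theorem LimSet.definable (hM : IsOMinimal L C) {z : C} (hz : z ∈ dcl L A) {k : Fin n}
    {D : Set (Fin k → C)} (hD : A.Definable L D) {b : Fin n → (Fin k → C) → C}
    (hb : ∀ j, k ≤ j → A.DefinableFun L (b j)) {U : Fin n → (Fin (k + 1) → C) → C}
    (hU : ∀ j, k ≤ j → A.DefinableFun L (U j)) : A.Definable L (LimSet z k D b U) := by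
  have hD' : DP L A (fun x => x ∈ D) := hD
  have hT : ∀ l : Fin k, A.DefinableFun L (fun y : Fin n → C => Fin.take k k.isLt.le y l) :=
    fun l => DT.var _
  refine DP.and (DP.subst hD' hT) (DP.allFin fun j => ?_)
  by_cases hj : k ≤ j
  · exact DP.imp (DP.prop _) (DP.and (DP.subst (DP.good hM hz hD (hb j hj) (hU j hj)) hT)
      (DP.and (DP.lt hM (DT.subst (hb j hj) hT) (DT.var _))
      (DP.and (DP.inc hM (hb j hj) (hU j hj) hT (DT.var _))
      (DP.and (DP.lt hM (DT.const hz) (DT.snoc_app (hU j hj) hT (DT.var _)))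
      (DP.le hM (DT.snoc_app (hU j hj) hT (DT.var _))
        (DT.snoc_app (hU k le_rfl) hT (DT.var _)))))))
  · exact (DP.prop True).congr fun x => by simp [hj]

/-- The point with initial part `x` and remaining coordinates `b j x` is a limit point. -/
theorem LimSet.mem_closure (hM : IsOMinimal L C) {z : C} {k : Fin n}
    {D : Set (Fin k → C)} {b : Fin n → (Fin k → C) → C} {U : Fin n → (Fin (k + 1) → C) → C}
    {y d : Fin n → C} (hy : y ∈ LimSet z k D b U) (hd : ∀ l, l < k → d l = y l)
    (hdb : ∀ j, k ≤ j → d j = b j (Fin.take k k.isLt.le y)) : d ∈ closure (LimSet z k D b U) := by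
  obtain ⟨-, hdo, hmn, hmx, -⟩ := id hM
  obtain ⟨hyD, hyj⟩ := hy
  set x := Fin.take k k.isLt.le y with hx
  rw [mem_closure_iff_frequently]
  intro hev
  rw [← nhdsWithin_univ] at hev
  obtain ⟨p, q, hpq, hno⟩ := (ev_iff_box hM).1 hev
  obtain ⟨ε, hε⟩ := exists_gt z
  obtain ⟨tk, hk1, hk2, hk3, hk4, -⟩ := (hyj k le_rfl).1.small ε hε (q k)
    (by rw [← hdb k le_rfl]; exact (hpq k).2)
  have hex : ∀ j, ∃ t, k ≤ j → b j x < t ∧ t < q j ∧ Inc (b j) (U j) x t ∧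
      z < U j (Fin.snoc x t) ∧ U j (Fin.snoc x t) ≤ U k (Fin.snoc x tk) ∧ (j = k → t = tk) := by
    intro j
    by_cases hj : k ≤ j
    · by_cases hjk : j = k
      · subst hjk
        exact ⟨tk, fun _ => ⟨hk1, hk2, hk3, hk4, le_rfl, fun _ => rfl⟩⟩
      · obtain ⟨t, h1, h2, h3, h4, h5⟩ := (hyj j hj).1.small _ hk4 (q j)
          (by rw [← hdb j hj]; exact (hpq j).2)
        exact ⟨t, fun _ => ⟨h1, h2, h3, h4, h5, fun h => absurd h hjk⟩⟩
    · exact ⟨z, fun h => absurd h hj⟩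
  choose t ht using hex
  let w : Fin n → C := fun j => if j < k then y j else t j
  have hwx : Fin.take k k.isLt.le w = x := by
    ext l
    have : Fin.castLE k.isLt.le l < k := l.isLt
    simp [w, hx, Fin.take, this]
  have hwj : ∀ j, k ≤ j → w j = t j := fun j hj => if_neg hj.not_gt
  refine hno w (fun l => ?_) trivial ?_
  · by_cases hl : l < k
    · have : w l = d l := (if_pos hl).trans (hd l hl).symm
      rw [this]
      exact hpq l
    · have hl' := not_lt.1 hl
      rw [hwj l hl']
      refine ⟨(hpq l).1.trans ?_, (ht l hl').2.1⟩
      rw [hdb l hl']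
      exact (ht l hl').1
  · refine ⟨by rwa [hwx], fun j hj => ?_⟩
    obtain ⟨h1, -, h3, h4, h5, -⟩ := ht j hj
    have hk : t k = tk := (ht k le_rfl).2.2.2.2.2 rfl
    rw [hwx, hwj j hj, hwj k le_rfl, hk]
    exact ⟨(hyj j hj).1, h1, h3, h4, h5⟩

/-- A limit point with initial part `x` and `k`-th coordinate `b k x` has coordinates `b j x`: for
`b j x < r < d j`, nearby points `(x', y)` of the set would satisfy
`U j (x', r) < U j (x', y j) ≤ U k (x', y k)`, where the left side is close to `U j (x, r) > z` and
the right side is close to `z`. -/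
theorem LimSet.eq_of_mem_closure (hM : IsOMinimal L C) {z : C} {k : Fin n}
    {D : Set (Fin k → C)} {b : Fin n → (Fin k → C) → C} {U : Fin n → (Fin (k + 1) → C) → C}
    {d : Fin n → C} (hd : d ∈ closure (LimSet z k D b U))
    (hgood : ∀ j, k ≤ j → Good z D (b j) (U j) (Fin.take k k.isLt.le d))
    (hdk : d k = b k (Fin.take k k.isLt.le d)) {j : Fin n} (hj : k ≤ j) :
    d j = b j (Fin.take k k.isLt.le d) := by
  obtain ⟨-, hdo, hmn, hmx, -⟩ := id hM
  have hne : (𝓝[LimSet z k D b U] d).NeBot := mem_closure_iff_nhdsWithin_neBot.1 hd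
  have htk : Tendsto (fun y : Fin n → C => Fin.take k k.isLt.le y) (𝓝[LimSet z k D b U] d)
      (𝓝[D] (Fin.take k k.isLt.le d)) :=
    ContinuousWithinAt.tendsto_nhdsWithin
      (Continuous.continuousWithinAt (continuous_pi fun _ => continuous_apply _))
      (fun y hy => hy.1)
  have hco : ∀ j, Tendsto (fun y : Fin n → C => y j) (𝓝[LimSet z k D b U] d) (𝓝 (d j)) :=
    fun j => (continuous_apply j).continuousAt.tendsto.mono_left nhdsWithin_le_nhds
  have hmem : ∀ᶠ y in 𝓝[LimSet z k D b U] d, y ∈ LimSet z k D b U := self_mem_nhdsWithin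
  have hbj := (hgood j hj).cont.tendsto.comp htk
  have hle : b j (Fin.take k k.isLt.le d) ≤ d j :=
    le_of_tendsto_of_tendsto hbj (hco j) (hmem.mono fun y hy => (hy.2 j hj).2.1.le)
  refine hle.antisymm' (le_of_not_gt fun hlt => ?_)
  obtain ⟨r, hr1, hr2, hr3, hr4⟩ := (hgood j hj).cont_fibre _ hlt
  obtain ⟨ε, hε1, hε2⟩ := exists_between hr3
  obtain ⟨s, hs1, hs2⟩ := (hgood k le_rfl).uniform ε hε1
  have hfalse : ∀ᶠ y in 𝓝[LimSet z k D b U] d, False := by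
    filter_upwards [hmem, htk.eventually hs2, (tendsto_order.1 hbj).2 r hr1,
      (tendsto_order.1 (hco j)).1 r hr2, (tendsto_order.1 (hco k)).2 s (hdk ▸ hs1),
      (tendsto_order.1 (hr4.tendsto.comp htk)).1 ε hε2] with y e1 e2 e3 e4 e5 e6
    obtain ⟨-, -, i3, -, i5⟩ := e1.2 j hj
    have h1 := i3 r (y j) e3 e4 le_rfl
    have h2 := e2 (y k) (e1.2 k le_rfl).2.1 e5
    exact lt_irrefl _ ((e6.trans h1).trans_le (i5.trans h2.le))
  exact hfalse.exists.elim fun _ h => h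

end LimitSet

/-! ### Comparison of coordinates -/

section Comparison

set_option linter.unusedSectionVars false

variable {L : FirstOrder.Language} {C : Type*} [L.Structure C] [LinearOrder C] {A B : Set C}

/-- If `c' ≾ c` over `B`, then below every `d ∈ dcl (B ∪ {c})` principal above `z` there is an
element of `dcl (B ∪ {c'})` which is principal above `z`. -/
theorem PrecSim.exists_principal {z c c' d : C} (h : PrecSim L z B c' c)
    (hd : PrincipalAbove L B d z) (hdc : d ∈ dcl L (B ∪ {c})) :
    ∃ d' ∈ dcl L (B ∪ {c'}), PrincipalAbove L B d' z ∧ d' ≤ d := by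
  have key : ∃ d' ∈ dcl L (B ∪ {c'}), z < d' ∧ d' ≤ d := by
    rcases h with ⟨e, he, hze, hno⟩ | ⟨-, h⟩
    · exact ⟨e, he, hze, le_of_not_gt fun hlt => hno d hdc ⟨hd.2.1, hlt⟩⟩
    · by_contra hcon
      exact h ⟨d, hdc, hd.2.1, fun e he hI => hcon ⟨e, he, hI.1, hI.2.le⟩⟩
  obtain ⟨d', h1, h2, h3⟩ := key
  exact ⟨d', h1, ⟨hd.1, h2, fun e he hI => hd.2.2 e he ⟨hI.1, hI.2.trans_le h3⟩⟩, h3⟩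

theorem union_below {n : ℕ} (c : Fin n → C) (k : Fin n) :
    A ∪ below c k = A ∪ Set.range (Fin.take k k.isLt.le c) := by
  congr 1
  ext t
  constructor
  · rintro ⟨l, hl, rfl⟩
    exact ⟨⟨l, hl⟩, rfl⟩
  · rintro ⟨l, rfl⟩
    exact ⟨Fin.castLE k.isLt.le l, l.isLt, rfl⟩

theorem union_range_snoc {m : ℕ} (a : Fin m → C) (t : C) :
    A ∪ Set.range a ∪ {t} = A ∪ Set.range (Fin.snoc a t : Fin (m + 1) → C) := by
  rw [Set.union_assoc]
  congr 1
  ext s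
  constructor
  · rintro (⟨l, rfl⟩ | rfl)
    · exact ⟨l.castSucc, by simp⟩
    · exact ⟨Fin.last m, by simp⟩
  · rintro ⟨l, rfl⟩
    refine Fin.lastCases ?_ (fun l => ?_) l
    · right; simp
    · left; simp

/-- A definable function of `n` variables that depends on the first `k` only, as a function of `k`
variables; the element `z` fills the remaining arguments. -/
theorem exists_restrict {n : ℕ} {k : Fin n} {z : C} (hz : z ∈ dcl L A) {f : (Fin n → C) → C}
    (hf : DefFun L A f) (hdep : ∀ x y : Fin n → C, (∀ l, l < k → x l = y l) → f x = f y) :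
    ∃ b : (Fin k → C) → C, A.DefinableFun L b ∧ ∀ x, f x = b (Fin.take k k.isLt.le x) := by
  have hf' : A.DefinableFun L f := DT.of_graph
    (DP.subst (P := fun p : Fin (n + 1) → C => f (Fin.init p) = p (Fin.last n)) hf
      (t := Fin.snoc (α := fun _ => (Fin n ⊕ Unit → C) → C) (fun l x => x (Sum.inl l))
        (fun x => x (Sum.inr ()))) (fun i => by
          refine Fin.lastCases ?_ (fun l => ?_) i
          · simpa using DT.var _
          · simpa using DT.var _) |>.congr fun x => by simp [Fin.init_def])
  refine ⟨fun x => f fun i => if h : i < k then x ⟨i, h⟩ else z, DT.subst hf' fun i => ?_,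
    fun x => hdep _ _ fun l hl => ?_⟩
  · by_cases h : i < k
    · simpa [h] using DT.var _
    · simpa [h] using DT.const hz
  · simp [hl, Fin.take]

end Comparison

end OMinPaper

/-- Under Condition (★) — `p` a decreasing `n`-type over `A` with
realization `c̄`, `k = Q(i) > 0` (here: `c_k` is principal over `Ac̄_{<k}` and no coordinate
strictly between `k` and `i` is principal over the preceding ones), and for `k ≤ j` the type
`tp(c_j/Ac̄_{<k})` principal above `β_j(c̄_{<k})` for `A`-definable functions `β_j` of the
first `k−1` coordinates — there is an `A`-definable set `C⁰ ∋ c̄` such that for every `ā` in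
the projection of `C⁰` to the first `k−1` coordinates, `cl(C⁰)` contains a unique point `d̄`
with first `k` coordinates `⟨ā, β_k(ā)⟩`, and this point is `⟨ā, β_k(ā),…,β_n(ā)⟩`
(independently of the choice of `C⁰`). -/
theorem statement_15 (L : FirstOrder.Language) (C : Type*) [L.Structure C]
    [LinearOrder C] [TopologicalSpace C] [OrderTopology C]
    (hmin : IsOMinimal L C)
    (hinter : AllPrincipalInterdef L C)
    (z : C) (hz : z ∈ dcl L (∅ : Set C))
    (A : Set C) (n : ℕ) (c : Fin n → C)
    (hdec : Decreasing L z A c)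
    (i k : Fin n) (hki : k ≤ i)
    (hkpr : Principal L (A ∪ below c k) (c k))
    (hmax : ∀ j : Fin n, k < j → j ≤ i → ¬ Principal L (A ∪ below c j) (c j))
    (β : Fin n → (Fin n → C) → C)
    (hβdef : ∀ j : Fin n, k ≤ j → DefFun L A (β j))
    (hβdep : ∀ j : Fin n, k ≤ j → ∀ x y : Fin n → C,
      (∀ l : Fin n, l < k → x l = y l) → β j x = β j y)
    (hβ : ∀ j : Fin n, k ≤ j → PrincipalAbove L (A ∪ below c k) (c j) (β j c)) :
    ∃ C0 : Set (Fin n → C), A.Definable L C0 ∧ c ∈ C0 ∧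
      ∀ x : Fin n → C, (∃ y ∈ C0, ∀ l : Fin n, l < k → y l = x l) →
        (∃! d : Fin n → C, d ∈ closure C0 ∧ (∀ l : Fin n, l < k → d l = x l) ∧
            d k = β k x) ∧
        (∀ d : Fin n → C, d ∈ closure C0 → (∀ l : Fin n, l < k → d l = x l) →
            d k = β k x → ∀ j : Fin n, k ≤ j → d j = β j x) := by
  have hzA : ∀ B : Set C, z ∈ dcl L B := fun B => dcl_mono (Set.empty_subset _) hz
  set a : Fin k → C := Fin.take k k.isLt.le c with ha
  have hB : A ∪ below c k = A ∪ Set.range a := union_below c k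
  rw [hB] at hβ
  obtain ⟨D, hD⟩ := (lg_exists_cont hmin hz k).1 A a
  -- `β j` as a function of the first `k` coordinates
  have hb : ∀ j, ∃ b : (Fin k → C) → C, k ≤ j → A.DefinableFun L b ∧
      ∀ x, β j x = b (Fin.take k k.isLt.le x) := by
    intro j
    by_cases hj : k ≤ j
    · obtain ⟨b, hb⟩ := exists_restrict (hzA A) (hβdef j hj) (hβdep j hj)
      exact ⟨b, fun _ => hb⟩
    · exact ⟨fun _ => z, fun h => absurd h hj⟩
  choose b hb using hb
  -- elements of `dcl (A ∪ {c_{<k}, c j})` principal above `z`, the largest one for `j = k`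
  obtain ⟨v, hv, hvx⟩ := PrincipalAbove.transfer hinter (hβ k le_rfl).1 (hzA (A ∪ Set.range a))
  have hdk : PrincipalAbove L (A ∪ Set.range a) (v (c k)) z := hvx _ (hβ k le_rfl)
  have hdk' : v (c k) ∈ dcl L (A ∪ Set.range a ∪ {c k}) :=
    (hv.mono Set.subset_union_left).apply_mem (mem_dcl_of_mem (Or.inr rfl))
  have hU : ∀ j, ∃ U : (Fin (k + 1) → C) → C, k ≤ j → A.DefinableFun L U ∧
      PrincipalAbove L (A ∪ Set.range a) (U (Fin.snoc a (c j))) z ∧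
      U (Fin.snoc a (c j)) ≤ v (c k) ∧ (j = k → U (Fin.snoc a (c j)) = v (c k)) := by
    intro j
    by_cases hj : k ≤ j
    · have : ∃ d ∈ dcl L (A ∪ Set.range a ∪ {c j}), PrincipalAbove L (A ∪ Set.range a) d z ∧
          d ≤ v (c k) ∧ (j = k → d = v (c k)) := by
        rcases hj.eq_or_lt with rfl | hlt
        · exact ⟨_, hdk', hdk, le_rfl, fun _ => rfl⟩
        · have h := hdec k j hlt
          rw [hB] at h
          obtain ⟨d, h1, h2, h3⟩ := h.exists_principal hdk hdk'
          exact ⟨d, h1, h2, h3, fun h => absurd h hlt.ne'⟩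
      obtain ⟨d, h1, h2⟩ := this
      rw [union_range_snoc] at h1
      obtain ⟨U, hU, hUd⟩ := exists_fun_of_mem_dcl hz h1
      exact ⟨U, fun _ => ⟨hU, by rwa [hUd]⟩⟩
    · exact ⟨fun _ => z, fun h => absurd h hj⟩
  choose U hU using hU
  have hgood : ∀ j, k ≤ j → Good z D (b j) (U j) a ∧ Inc (b j) (U j) a (c j) := fun j hj =>
    good_of_principal hmin hinter hz hD (hb j hj).1 (hU j hj).1
      (by rw [← (hb j hj).2]; exact hβ j hj) (hU j hj).2.1
  refine ⟨LimSet z k D b U, LimSet.definable hmin (hzA A) hD.2.1 (fun j hj => (hb j hj).1)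
    (fun j hj => (hU j hj).1), ⟨hD.1, fun j hj => ?_⟩, ?_⟩
  · refine ⟨(hgood j hj).1, ?_, (hgood j hj).2, (hU j hj).2.1.2.1, ?_⟩
    · rw [← (hb j hj).2]
      exact (hβ j hj).2.1
    · exact (hU j hj).2.2.1.trans_eq ((hU k le_rfl).2.2.2 rfl).symm
  · rintro x ⟨y, hy, hyx⟩
    have hβy : ∀ j, k ≤ j → β j x = b j (Fin.take k k.isLt.le y) := fun j hj =>
      (hβdep j hj x y fun l hl => (hyx l hl).symm).trans ((hb j hj).2 y)
    have huniq : ∀ d : Fin n → C, d ∈ closure (LimSet z k D b U) → (∀ l, l < k → d l = x l) →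
        d k = β k x → ∀ j : Fin n, k ≤ j → d j = β j x := by
      intro d hd hdx hdk j hj
      have e : Fin.take k k.isLt.le d = Fin.take k k.isLt.le y := by
        ext l
        exact (hdx _ l.isLt).trans (hyx _ l.isLt).symm
      rw [hβy j hj, ← e]
      refine LimSet.eq_of_mem_closure hmin hd (fun i hi => ?_) ?_ hj
      · rw [e]
        exact (hy.2 i hi).1
      · rw [hdk, e, hβy k le_rfl]
    refine ⟨⟨fun j => if j < k then x j else β j x, ⟨?_, fun l hl => if_pos hl,
      if_neg (lt_irrefl k)⟩, ?_⟩, huniq⟩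
    · refine LimSet.mem_closure hmin hy (fun l hl => ?_) (fun j hj => ?_)
      · rw [if_pos hl, hyx l hl]
      · rw [if_neg hj.not_gt, hβy j hj]
    · rintro d ⟨h1, h2, h3⟩
      ext j
      by_cases hj : j < k
      · rw [if_pos hj, h2 j hj]
      · rw [if_neg hj, huniq d h1 h2 h3 j (not_lt.1 hj)]
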